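/- Assume the Riemann Hypothesis. Then for all x ≥ 10^13, one has Σ_{p ≤ x} (log p)²/p < (log x)²/2 + 3.5402, where the sum runs over prime numbers p ≤ x. -/

import Mathlib

/-!
Including the prime powers only increases the sum, so it suffices to bound
`S x = ∑ n ≤ x, Λ n * log n / n`. Write `G s = (ζ' / ζ)' (1 + s) - s⁻²`, which is `(log ζ₁)''` at
`1 + s` for `ζ₁ s = (s - 1) * ζ s`; the Dirichlet series of `Λ n * log n / n` is `G s + s⁻²`.

As the terms are nonnegative, `S x` is at most the mean of `S` over a logarithmic interval
`[log x, log x + δ]`. By Mellin inversion that mean is the sum of a main term, contributed by `s⁻²`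
and equal to `((log x + δ) ^ 3 - log x ^ 3) / (6 * δ)`, of `G 0`, and of an absolutely convergent
integral of `G s - G 0` over a vertical line. Under the Riemann Hypothesis the last integral can be
moved to `Re s = -2 / 5`, where it is `O (x ^ (-2 / 5) / √δ)`: the function `ζ₁` is zero free on the
disc of radius `1` about `3 / 2 + i t`, so Borel–Carathéodory for a branch of `log ζ₁` bounds
`(log ζ₁)''` by a multiple of `log (60 * max 1 |t|)`. Finally `G 0 ≤ 2 / e`, read off the formula
`ζ₁ s = s - s * (s - 1) * ∫ t in (1, ∞), {t} * t ^ (-s - 1)`, and one takes `δ = 4 / log x`.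
-/

section CauchyFormula

open Metric Nat

variable {E : Type*} [NormedAddCommGroup E] [NormedSpace ℂ E] [CompleteSpace E]

lemma circleIntegral_inv_sub_pow_smul_deriv {f : ℂ → E} {U : Set ℂ} {c w : ℂ} {R : ℝ} (n : ℕ)
    (hU : IsOpen U) (hf : DifferentiableOn ℂ f U) (hRU : closedBall c R ⊆ U) (hw : w ∈ ball c R) :
    (∮ z in C(c, R), ((z - w) ^ n)⁻¹ • deriv f z) =
      (n : ℂ) • ∮ z in C(c, R), ((z - w) ^ (n + 1))⁻¹ • f z := by
  have hR : 0 ≤ R := (pos_of_mem_ball hw).le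
  have hSU : sphere c R ⊆ U := sphere_subset_closedBall.trans hRU
  have hne : ∀ z ∈ sphere c R, z - w ≠ 0 := fun z hz h ↦
    (mem_ball.1 hw).ne (sub_eq_zero.1 h ▸ mem_sphere.1 hz)
  have hcont (k : ℕ) : ContinuousOn (fun z ↦ ((z - w) ^ k)⁻¹) (sphere c R) :=
    ContinuousOn.inv₀ (by fun_prop) fun z hz ↦ pow_ne_zero k (hne z hz)
  have hderiv : ∀ z ∈ sphere c R, HasDerivWithinAt (fun z ↦ ((z - w) ^ n)⁻¹ • f z)
      (((z - w) ^ n)⁻¹ • deriv f z - (n : ℂ) • ((z - w) ^ (n + 1))⁻¹ • f z) (sphere c R) z := by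
    intro z hz
    have hpow : HasDerivAt (fun z : ℂ ↦ ((z - w) ^ n)⁻¹) (-(n * ((z - w) ^ (n + 1))⁻¹)) z := by
      refine ((((hasDerivAt_id z).sub_const w).pow n).inv (pow_ne_zero n (hne z hz))).congr_deriv ?_
      have := hne z hz
      rcases n with _ | n
      · simp
      · simp only [id_eq, Pi.pow_apply, add_tsub_cancel_right]
        field_simp
        ring
    refine (hpow.smul (hf.differentiableAt (hU.mem_nhds (hSU hz))).hasDerivAt
      |>.congr_deriv ?_).hasDerivWithinAt
    rw [neg_smul, mul_smul, ← sub_eq_add_neg]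
  have hzero := circleIntegral.integral_eq_zero_of_hasDerivWithinAt hR hderiv
  rwa [circleIntegral.integral_sub, circleIntegral.integral_smul, sub_eq_zero] at hzero
  · exact ((hcont n).smul ((hf.deriv hU).continuousOn.mono hSU)).circleIntegrable hR
  · exact (((hcont (n + 1)).smul (hf.continuousOn.mono hSU)).const_smul (n : ℂ)).circleIntegrable hR

lemma circleIntegral_inv_sub_pow_smul {f : ℂ → E} {U : Set ℂ} {c w : ℂ} {R : ℝ} (n : ℕ)
    (hU : IsOpen U) (hf : DifferentiableOn ℂ f U) (hRU : closedBall c R ⊆ U) (hw : w ∈ ball c R) :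
    (n ! : ℂ) • (∮ z in C(c, R), ((z - w) ^ (n + 1))⁻¹ • f z) =
      (2 * Real.pi * Complex.I : ℂ) • iteratedDeriv n f w := by
  induction n generalizing f with
  | zero =>
    simpa using (hf.mono hRU).circleIntegral_sub_inv_smul hw
  | succ n ih =>
    rw [iteratedDeriv_succ', ← ih (hf.deriv hU),
      circleIntegral_inv_sub_pow_smul_deriv (n + 1) hU hf hRU hw, smul_smul, Nat.factorial_succ]
    push_cast
    rw [mul_comm]

end CauchyFormula

section BorelCaratheodory

open Metric Nat Complex ComplexConjugate Real

/-- The kernel `n! (z - c) / (z - w)ⁿ⁺¹`: averaging it against a holomorphic function over a circle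
centred at `c` and enclosing `w` yields the `n`-th derivative at `w`. -/
noncomputable def cauchyKernel (n : ℕ) (c w z : ℂ) : ℂ := n ! * (z - c) / (z - w) ^ (n + 1)

variable {f : ℂ → ℂ} {U : Set ℂ} {c w z : ℂ} {R r A : ℝ} {n : ℕ}

lemma continuousOn_cauchyKernel (hw : w ∈ ball c R) :
    ContinuousOn (cauchyKernel n c w) (sphere c R) := by
  unfold cauchyKernel
  refine ContinuousOn.div (by fun_prop) (by fun_prop) fun z hz h ↦ ?_
  exact (mem_ball.1 hw).ne (sub_eq_zero.1 (pow_eq_zero_iff n.succ_ne_zero |>.1 h) ▸ mem_sphere.1 hz)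

lemma norm_cauchyKernel_le (hw : ‖w - c‖ ≤ r) (hr : r < R) (hz : z ∈ sphere c R) :
    ‖cauchyKernel n c w z‖ ≤ n ! * R / (R - r) ^ (n + 1) := by
  have hzc : ‖z - c‖ = R := mem_sphere_iff_norm.1 hz
  have hR : 0 ≤ R := hzc ▸ norm_nonneg _
  have hzw : R - r ≤ ‖z - w‖ := by
    have := norm_sub_norm_le (z - c) (w - c)
    rw [sub_sub_sub_cancel_right] at this
    linarith
  have : 0 < R - r := sub_pos.2 hr
  rw [cauchyKernel, norm_div, norm_mul, norm_pow, hzc, RCLike.norm_natCast]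
  gcongr

lemma circleAverage_cauchyKernel_mul (hU : IsOpen U) (hf : DifferentiableOn ℂ f U)
    (hRU : closedBall c R ⊆ U) (hw : w ∈ ball c R) :
    circleAverage (fun z ↦ cauchyKernel n c w z * f z) c R = iteratedDeriv n f w := by
  have hR : 0 < R := pos_of_mem_ball hw
  have hcongr : (∮ z in C(c, R), (z - c)⁻¹ • (cauchyKernel n c w z * f z)) =
      (n ! : ℂ) • ∮ z in C(c, R), ((z - w) ^ (n + 1))⁻¹ • f z := by
    rw [← circleIntegral.integral_smul]
    refine circleIntegral.integral_congr hR.le fun z hz ↦ ?_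
    have hzc : z - c ≠ 0 := sub_ne_zero.2 (ne_of_mem_sphere hz hR.ne')
    simp only [cauchyKernel, smul_eq_mul]
    field_simp
  rw [circleAverage_eq_circleIntegral hR.ne', hcongr,
    circleIntegral_inv_sub_pow_smul n hU hf hRU hw, inv_smul_smul₀ two_pi_I_ne_zero]

lemma conj_cauchyKernel_of_mem_sphere (hw : w ∈ ball c R) (hz : z ∈ sphere c R) :
    conj (cauchyKernel n c w z) =
      n ! * R ^ 2 * (z - c) ^ n / (R ^ 2 - conj (w - c) * (z - c)) ^ (n + 1) := by
  have hzc : z - c ≠ 0 := sub_ne_zero.2 (ne_of_mem_sphere hz (pos_of_mem_ball hw).ne')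
  have hzw : conj (z - c) - conj (w - c) ≠ 0 := by
    rw [← map_sub, sub_sub_sub_cancel_right, Ne, map_eq_zero, sub_eq_zero]
    rintro rfl
    exact (mem_ball.1 hw).ne (mem_sphere.1 hz)
  have hR : (R : ℂ) ^ 2 = conj (z - c) * (z - c) := by
    rw [conj_mul', mem_sphere_iff_norm.1 hz]
  have hsub : conj z - conj w = conj (z - c) - conj (w - c) := by simp
  simp only [cauchyKernel, map_div₀, map_mul, map_pow, map_natCast]
  rw [hR, ← sub_mul, map_sub conj z w, hsub, mul_pow]
  field_simp
  ring

lemma circleAverage_cauchyKernel_mul_conj (hn : n ≠ 0) (hf : DifferentiableOn ℂ f (closedBall c R))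
    (hw : w ∈ ball c R) :
    circleAverage (fun z ↦ cauchyKernel n c w z * conj (f z)) c R = 0 := by
  have hR : 0 < R := pos_of_mem_ball hw
  set F : ℂ → ℂ := fun z ↦
    n ! * R ^ 2 * (z - c) ^ n / (R ^ 2 - conj (w - c) * (z - c)) ^ (n + 1) * f z with hF
  have hne : ∀ z ∈ closedBall c R, (R : ℂ) ^ 2 - conj (w - c) * (z - c) ≠ 0 := by
    intro z hz h
    have hnorm := congrArg norm (sub_eq_zero.1 h)
    rw [norm_mul, norm_conj, norm_pow, norm_real, norm_of_nonneg hR.le] at hnorm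
    nlinarith [mem_ball_iff_norm.1 hw, mem_closedBall_iff_norm.1 hz, norm_nonneg (w - c),
      norm_nonneg (z - c)]
  have hFd : DifferentiableOn ℂ F (closedBall c R) :=
    .mul (.div (by fun_prop) (by fun_prop) fun z hz ↦ pow_ne_zero _ (hne z hz)) hf
  have hmean : circleAverage F c R = 0 := by
    rw [DiffContOnCl.circleAverage]
    · simp [hF, hn]
    · rw [abs_of_pos hR]
      exact hFd.diffContOnCl_ball subset_rfl
  have hconj := (conjCLE : ℂ →L[ℝ] ℂ).circleAverage_comp_comm
    ((hFd.continuousOn.mono sphere_subset_closedBall).circleIntegrable hR.le)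
  rw [hmean, map_zero] at hconj
  refine (circleAverage_congr_sphere fun z hz ↦ ?_).trans hconj
  rw [abs_of_pos hR] at hz
  simp only [hF, Function.comp_apply, ContinuousLinearEquiv.coe_coe, conjCLE_apply,
    ← conj_cauchyKernel_of_mem_sphere hw hz, map_mul, conj_conj]

lemma iteratedDeriv_eq_circleAverage_re (hn : n ≠ 0) (hU : IsOpen U) (hf : DifferentiableOn ℂ f U)
    (hRU : closedBall c R ⊆ U) (hw : w ∈ ball c R) (A : ℝ) :
    iteratedDeriv n f w =
      circleAverage (fun z ↦ cauchyKernel n c w z * (2 * ((f z).re - A) : ℝ)) c R := by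
  -- `conj f` averages to zero against the kernel, so `f - 2 * A` may be replaced by
  -- `f + conj f - 2 * A`.
  have hR : 0 ≤ R := (pos_of_mem_ball hw).le
  have hK := continuousOn_cauchyKernel (n := n) hw
  have hfc : ContinuousOn f (sphere c R) :=
    hf.continuousOn.mono (sphere_subset_closedBall.trans hRU)
  have hf' : DifferentiableOn ℂ (fun z ↦ -2 * A + f z) U := hf.const_add _
  calc iteratedDeriv n f w = iteratedDeriv n (fun z ↦ -2 * A + f z) w + 0 := by
        rw [iteratedDeriv_const_add (pos_of_ne_zero hn), add_zero]
    _ = circleAverage (fun z ↦ cauchyKernel n c w z * (-2 * A + f z)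
          + cauchyKernel n c w z * conj (f z)) c R := by
        rw [← circleAverage_cauchyKernel_mul hU hf' hRU hw,
          ← circleAverage_cauchyKernel_mul_conj hn (hf.mono hRU) hw, ← circleAverage_fun_add]
        · exact (hK.mul (continuousOn_const.add hfc)).circleIntegrable hR
        · exact (hK.mul (continuous_conj.comp_continuousOn hfc)).circleIntegrable hR
    _ = _ := by
        congr with z
        rw [← mul_add, add_assoc, add_conj]
        push_cast
        ring

lemma circleAverage_re_eq_re_center (hR : 0 ≤ R) (hf : DifferentiableOn ℂ f (closedBall c R)) :
    circleAverage (fun z ↦ (f z).re) c R = (f c).re := by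
  have hre := reCLM.circleAverage_comp_comm
    ((hf.continuousOn.mono sphere_subset_closedBall).circleIntegrable hR)
  rw [DiffContOnCl.circleAverage] at hre
  · exact hre
  · rw [abs_of_nonneg hR]
    exact hf.diffContOnCl_ball subset_rfl

lemma norm_iteratedDeriv_le_of_re_le_sphere (hn : n ≠ 0) (hU : IsOpen U)
    (hf : DifferentiableOn ℂ f U) (hRU : closedBall c R ⊆ U)
    (hA : ∀ z ∈ sphere c R, (f z).re ≤ A) (hw : ‖w - c‖ ≤ r) (hr : r < R) :
    ‖iteratedDeriv n f w‖ ≤ 2 * n ! * (A - (f c).re) * R / (R - r) ^ (n + 1) := by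
  have hR : 0 ≤ R := (norm_nonneg _).trans (hw.trans hr.le)
  have hwR : w ∈ ball c R := mem_ball_iff_norm.2 (hw.trans_lt hr)
  have hre : ContinuousOn (fun z ↦ (f z).re) (sphere c R) :=
    continuous_re.comp_continuousOn (hf.continuousOn.mono (sphere_subset_closedBall.trans hRU))
  set C : ℝ := 2 * (n ! * R / (R - r) ^ (n + 1)) with hC
  have hpoint : ∀ z ∈ sphere c R,
      ‖cauchyKernel n c w z * (2 * ((f z).re - A) : ℝ)‖ ≤ C * (A - (f z).re) := by
    intro z hz
    have hzA := hA z hz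
    rw [norm_mul, norm_real, norm_of_nonpos (by linarith)]
    calc ‖cauchyKernel n c w z‖ * -(2 * ((f z).re - A))
        ≤ n ! * R / (R - r) ^ (n + 1) * -(2 * ((f z).re - A)) := by
          gcongr
          · linarith
          · exact norm_cauchyKernel_le hw hr hz
      _ = C * (A - (f z).re) := by rw [hC]; ring
  have hbound : CircleIntegrable (fun z ↦ C * (A - (f z).re)) c R :=
    (continuousOn_const.mul (continuousOn_const.sub hre)).circleIntegrable hR
  calc ‖iteratedDeriv n f w‖
      = ‖circleAverage (fun z ↦ cauchyKernel n c w z * (2 * ((f z).re - A) : ℝ)) c R‖ := by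
        rw [← iteratedDeriv_eq_circleAverage_re hn hU hf hRU hwR A]
    _ ≤ circleAverage (fun z ↦ C * (A - (f z).re)) c R := by
        rw [circleAverage_def, circleAverage_def, norm_smul, smul_eq_mul,
          norm_of_nonneg (by positivity)]
        gcongr
        refine intervalIntegral.norm_integral_le_of_norm_le (by positivity) ?_ hbound
        exact .of_forall fun θ _ ↦ hpoint _ (circleMap_mem_sphere _ hR _)
    _ = C * (A - (f c).re) := by
        simp_rw [← smul_eq_mul C]
        rw [circleAverage_fun_smul, circleAverage_fun_sub (circleIntegrable_const _ _ _)
          (hre.circleIntegrable hR), circleAverage_const,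
          circleAverage_re_eq_re_center hR (hf.mono hRU)]
    _ = _ := by rw [hC]; ring

theorem norm_iteratedDeriv_le_of_re_le (hn : n ≠ 0) (hf : DifferentiableOn ℂ f (ball c R))
    (hA : ∀ z ∈ ball c R, (f z).re ≤ A) (hw : ‖w - c‖ ≤ r) (hr : r < R) :
    ‖iteratedDeriv n f w‖ ≤ 2 * n ! * (A - (f c).re) * R / (R - r) ^ (n + 1) := by
  have hcont : ContinuousAt (fun R' ↦ 2 * n ! * (A - (f c).re) * R' / (R' - r) ^ (n + 1)) R :=
    .div (by fun_prop) (by fun_prop) (pow_ne_zero _ (sub_ne_zero.2 hr.ne'))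
  refine ge_of_tendsto (hcont.tendsto.mono_left (nhdsWithin_le_nhds (s := Set.Iio R))) ?_
  filter_upwards [Ioo_mem_nhdsLT hr] with R' hR'
  have hsub : closedBall c R' ⊆ ball c R := closedBall_subset_ball hR'.2
  exact norm_iteratedDeriv_le_of_re_le_sphere hn isOpen_ball hf hsub
    (fun z hz ↦ hA z (hsub (sphere_subset_closedBall hz))) hw hR'.1

end BorelCaratheodory

section LogDeriv

open Metric Nat Complex

variable {f : ℂ → ℂ} {c w : ℂ} {R r M : ℝ}

lemma exists_eq_mul_exp_sub_of_ne_zero (hf : DifferentiableOn ℂ f (ball c R))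
    (h0 : ∀ z ∈ ball c R, f z ≠ 0) :
    ∃ g : ℂ → ℂ, (∀ z ∈ ball c R, HasDerivAt g (logDeriv f z) z) ∧
      ∀ z ∈ ball c R, f z = f c * exp (g z - g c) := by
  obtain ⟨g, hg⟩ := ((hf.deriv isOpen_ball).div hf h0).isExactOn_ball
  have hexp (z : ℂ) (hz : z ∈ ball c R) : HasDerivAt (exp ∘ g) (exp (g z) * logDeriv f z) z :=
    (hg z hz).cexp
  obtain ⟨a, -, ha⟩ := (logDeriv_eqOn_iff hf
    (fun z hz ↦ (hexp z hz).differentiableAt.differentiableWithinAt) isOpen_ball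
    (convex_ball c R).isPreconnected (fun z _ ↦ exp_ne_zero (g z)) h0).1 fun z hz ↦ by
      rw [logDeriv_apply (exp ∘ g), (hexp z hz).deriv, Function.comp_apply,
        mul_div_cancel_left₀ _ (exp_ne_zero _)]
  refine ⟨g, hg, fun z hz ↦ ?_⟩
  have hfz := ha hz
  have hfc := ha (mem_ball_self (pos_of_mem_ball hz))
  simp only [Pi.smul_apply, Function.comp_apply, smul_eq_mul] at hfz hfc
  rw [hfz, hfc, exp_sub]
  field_simp [exp_ne_zero]

theorem norm_iteratedDeriv_logDeriv_le (n : ℕ) (hf : DifferentiableOn ℂ f (ball c R))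
    (h0 : ∀ z ∈ ball c R, f z ≠ 0) (hM : ∀ z ∈ ball c R, ‖f z‖ ≤ M * ‖f c‖)
    (hw : ‖w - c‖ ≤ r) (hr : r < R) :
    ‖iteratedDeriv n (logDeriv f) w‖ ≤ 2 * (n + 1)! * Real.log M * R / (R - r) ^ (n + 2) := by
  have hwR : w ∈ ball c R := mem_ball_iff_norm.2 (hw.trans_lt hr)
  have hfc : 0 < ‖f c‖ := norm_pos_iff.2 (h0 c (mem_ball_self (pos_of_mem_ball hwR)))
  obtain ⟨g, hg, hfg⟩ := exists_eq_mul_exp_sub_of_ne_zero hf h0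
  have hre : ∀ z ∈ ball c R, (g z).re ≤ Real.log M + (g c).re := by
    intro z hz
    have hfz := hM z hz
    rw [hfg z hz, norm_mul, norm_exp, sub_re, mul_comm, mul_le_mul_iff_left₀ hfc] at hfz
    rw [← sub_le_iff_le_add, Real.le_log_iff_exp_le ((Real.exp_pos _).trans_le hfz)]
    exact hfz
  have hderiv : iteratedDeriv (n + 1) g w = iteratedDeriv n (logDeriv f) w := by
    rw [iteratedDeriv_succ']
    refine Filter.EventuallyEq.iteratedDeriv_eq n ?_
    filter_upwards [isOpen_ball.mem_nhds hwR] with z hz using (hg z hz).deriv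
  rw [← hderiv]
  simpa using norm_iteratedDeriv_le_of_re_le n.succ_ne_zero
    (fun z hz ↦ (hg z hz).differentiableAt.differentiableWithinAt) hre hw hr

end LogDeriv

section ZetaMellin

open Set Filter Asymptotics Complex MeasureTheory

variable {s : ℂ}

/-- The fractional part on `(1, ∞)`, extended by zero. Up to elementary factors its Mellin transform
is the zeta function, which gives the continuation of the latter to `0 < Re s`. -/
noncomputable def fractTail : ℝ → ℂ := (Ioi (1 : ℝ)).indicator fun t ↦ ((Int.fract t : ℝ) : ℂ)

lemma norm_fractTail_le (t : ℝ) : ‖fractTail t‖ ≤ 1 := by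
  refine (norm_indicator_le_norm_self _ _).trans ?_
  rw [norm_real, Real.norm_of_nonneg (Int.fract_nonneg t)]
  exact (Int.fract_lt_one t).le

lemma locallyIntegrableOn_fractTail : LocallyIntegrableOn fractTail (Ioi 0) := by
  have hmeas : Measurable fractTail :=
    (measurable_ofReal.comp measurable_fract).indicator measurableSet_Ioi
  refine LocallyIntegrable.locallyIntegrableOn ?_ _
  exact (locallyIntegrable_const (1 : ℝ)).mono hmeas.aestronglyMeasurable
    (.of_forall fun t ↦ by simpa using norm_fractTail_le t)

lemma fractTail_isBigO_atTop : fractTail =O[atTop] fun t : ℝ ↦ t ^ (-(0 : ℝ)) :=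
  .of_bound 1 (.of_forall fun t ↦ by simpa using norm_fractTail_le t)

lemma fractTail_isBigO_zero (b : ℝ) :
    fractTail =O[nhdsWithin 0 (Ioi 0)] fun t : ℝ ↦ t ^ (-b) := by
  refine .of_bound 1 ?_
  filter_upwards [Ioo_mem_nhdsGT (zero_lt_one' ℝ)] with t ht
  rw [fractTail, indicator_of_notMem (by simpa using ht.2.le), norm_zero]
  positivity

lemma mellinConvergent_fractTail (hs : s.re < 0) : MellinConvergent fractTail s :=
  mellinConvergent_of_isBigO_rpow locallyIntegrableOn_fractTail fractTail_isBigO_atTop hs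
    (fractTail_isBigO_zero (s.re - 1)) (by linarith)

lemma hasDerivAt_mellin_fractTail (hs : s.re < 0) :
    MellinConvergent (fun t ↦ Real.log t • fractTail t) s ∧
      HasDerivAt (mellin fractTail) (mellin (fun t ↦ Real.log t • fractTail t) s) s :=
  mellin_hasDerivAt_of_isBigO_rpow locallyIntegrableOn_fractTail fractTail_isBigO_atTop hs
    (fractTail_isBigO_zero (s.re - 1)) (by linarith)

lemma mellin_fractTail_eq (s : ℂ) :
    mellin fractTail s = ∫ t in Ioi (1 : ℝ), (t : ℂ) ^ (s - 1) * (Int.fract t : ℝ) := by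
  have hind (t : ℝ) : (t : ℂ) ^ (s - 1) • fractTail t =
      (Ioi (1 : ℝ)).indicator (fun t : ℝ ↦ (t : ℂ) ^ (s - 1) * (Int.fract t : ℝ)) t := by
    by_cases ht : t ∈ Ioi (1 : ℝ) <;> simp [fractTail, ht]
  simp only [mellin, hind]
  rw [setIntegral_indicator measurableSet_Ioi, inter_eq_right.2 (Ioi_subset_Ioi zero_le_one)]

lemma norm_mellin_fractTail_le (hs : s.re < 0) : ‖mellin fractTail s‖ ≤ 1 / (-s.re) := by
  have hint : IntegrableOn (fun t : ℝ ↦ t ^ (s.re - 1)) (Ioi 1) :=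
    integrableOn_Ioi_rpow_of_lt (by linarith) one_pos
  rw [mellin_fractTail_eq]
  refine (norm_integral_le_of_norm_le hint ?_).trans_eq ?_
  · filter_upwards [ae_restrict_mem measurableSet_Ioi] with t ht
    have ht0 : 0 < t := one_pos.trans ht
    rw [norm_mul, norm_cpow_eq_rpow_re_of_pos ht0, norm_real,
      Real.norm_of_nonneg (Int.fract_nonneg t), sub_re, one_re]
    exact mul_le_of_le_one_right (by positivity) (Int.fract_lt_one t).le
  · rw [integral_Ioi_rpow_of_lt (by linarith) one_pos, Real.one_rpow, sub_add_cancel,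
      ← neg_div_neg_eq, neg_neg]

lemma riemannZeta_eq_mul_integral_sub_fract (hs : 1 < s.re) :
    riemannZeta s =
      s * ∫ t in Ioi (1 : ℝ), ((t : ℂ) ^ (-s) - (t : ℂ) ^ (-s - 1) * (Int.fract t : ℝ)) := by
  rw [← LSeries_one_eq_riemannZeta hs, LSeries_eq_mul_integral 1 zero_le_one hs
    (LSeriesSummable_one_iff.2 hs) (.of_bound 1 (.of_forall fun n ↦ by simp))]
  congr 1
  refine setIntegral_congr_fun measurableSet_Ioi fun t ht ↦ ?_
  have ht0 : 0 < t := one_pos.trans ht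
  have hfloor : ((⌊t⌋₊ : ℕ) : ℂ) = (t : ℂ) - (Int.fract t : ℝ) := by
    rw [← ofReal_natCast, natCast_floor_eq_intCast_floor ht0.le, ← Int.self_sub_fract, ofReal_sub]
  have hcpow : (t : ℂ) ^ (-s) = t * (t : ℂ) ^ (-s - 1) := by
    rw [cpow_sub _ _ (ofReal_ne_zero.2 ht0.ne'), cpow_one,
      mul_div_cancel₀ _ (ofReal_ne_zero.2 ht0.ne')]
  simp only [Pi.one_apply, Finset.sum_const, Nat.card_Icc, add_tsub_cancel_right, nsmul_eq_mul,
    mul_one]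
  rw [hcpow, hfloor, neg_add']
  ring

lemma riemannZeta₁_eq_sub_mul (hs : s ≠ 1) : riemannZeta₁ s = (s - 1) * riemannZeta s := by
  rw [riemannZeta_eq_inv_sub_mul hs, mul_inv_cancel_left₀ (sub_ne_zero.2 hs)]

lemma riemannZeta₁_eq_sub_mul_mellin_of_one_lt_re (hs : 1 < s.re) :
    riemannZeta₁ s = s - s * (s - 1) * mellin fractTail (-s) := by
  have hs1 : s ≠ 1 := by rintro rfl; simp at hs
  have hneg : (-s).re < -1 := by simpa using hs
  have hcpow : IntegrableOn (fun t : ℝ ↦ (t : ℂ) ^ (-s)) (Ioi 1) :=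
    integrableOn_Ioi_cpow_of_lt hneg one_pos
  have hfract : IntegrableOn (fun t : ℝ ↦ (t : ℂ) ^ (-s - 1) * (Int.fract t : ℝ)) (Ioi 1) := by
    refine ((mellinConvergent_fractTail (s := -s) (by linarith)).mono_set
      (Ioi_subset_Ioi zero_le_one)).congr_fun (fun t ht ↦ ?_) measurableSet_Ioi
    simp [fractTail, mem_Ioi.1 ht]
  rw [riemannZeta₁_eq_sub_mul hs1, riemannZeta_eq_mul_integral_sub_fract hs,
    integral_sub hcpow hfract, ← mellin_fractTail_eq, integral_Ioi_cpow_of_lt hneg one_pos,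
    ofReal_one, one_cpow]
  have : -s + 1 ≠ 0 := by rwa [neg_add_eq_sub, sub_ne_zero, ne_comm]
  field_simp
  ring

theorem riemannZeta₁_eq_sub_mul_mellin (hs : 0 < s.re) :
    riemannZeta₁ s = s - s * (s - 1) * mellin fractTail (-s) := by
  set U : Set ℂ := {z | 0 < z.re}
  have hU : IsOpen U := isOpen_lt continuous_const continuous_re
  have hdiff : DifferentiableOn ℂ (fun s ↦ s - s * (s - 1) * mellin fractTail (-s)) U := by
    intro z (hz : 0 < z.re)
    have hmellin : DifferentiableAt ℂ (mellin fractTail) (-z) :=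
      (hasDerivAt_mellin_fractTail (s := -z) (by simpa using hz)).2.differentiableAt
    have hcomp : DifferentiableAt ℂ (fun s ↦ mellin fractTail (-s)) z :=
      hmellin.comp z differentiableAt_id.neg
    exact (by fun_prop : DifferentiableAt ℂ _ z).differentiableWithinAt
  refine AnalyticOnNhd.eqOn_of_preconnected_of_eventuallyEq
    (differentiable_riemannZeta₁.differentiableOn.analyticOnNhd hU) (hdiff.analyticOnNhd hU)
    (convex_halfSpace_re_gt 0).isPreconnected (z₀ := 2) (by simp [U]) ?_ hs
  filter_upwards [(isOpen_lt continuous_const continuous_re).mem_nhds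
    (show (2 : ℂ) ∈ {z : ℂ | 1 < z.re} by simp)] with z hz
    using riemannZeta₁_eq_sub_mul_mellin_of_one_lt_re hz

lemma norm_riemannZeta₁_le (hs : 0 < s.re) :
    ‖riemannZeta₁ s‖ ≤ ‖s‖ * (1 + ‖s - 1‖ / s.re) := by
  have hmellin : ‖mellin fractTail (-s)‖ ≤ 1 / s.re := by
    simpa using norm_mellin_fractTail_le (s := -s) (by simpa using hs)
  calc ‖riemannZeta₁ s‖ = ‖s‖ * ‖1 - (s - 1) * mellin fractTail (-s)‖ := by
        rw [riemannZeta₁_eq_sub_mul_mellin hs, ← norm_mul]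
        ring_nf
    _ ≤ ‖s‖ * (1 + ‖s - 1‖ * (1 / s.re)) := by
        gcongr
        refine (norm_sub_le _ _).trans ?_
        rw [norm_one, norm_mul]
        gcongr
    _ = ‖s‖ * (1 + ‖s - 1‖ / s.re) := by rw [mul_one_div]

end ZetaMellin

section ZetaLowerBound

open Complex

lemma tsum_one_div_nat_rpow_le {σ : ℝ} (hσ : 1 < σ) :
    ∑' n : ℕ, 1 / (n : ℝ) ^ σ ≤ σ / (σ - 1) := by
  have hterm : 0 ≤ ZetaAsymptotics.termTSum σ :=
    tsum_nonneg fun n ↦ ZetaAsymptotics.term_nonneg (n + 1) σ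
  have hlimit := ZetaAsymptotics.zeta_limit_aux1 hσ
  have hdiv : σ / (σ - 1) = 1 + 1 / (σ - 1) := by
    have := sub_ne_zero.2 hσ.ne'
    field_simp
    ring
  rw [(Real.summable_one_div_nat_rpow.2 hσ).tsum_eq_zero_add, Nat.cast_zero,
    Real.zero_rpow (by positivity), div_zero, zero_add, hdiv]
  push_cast
  nlinarith

theorem sub_one_div_le_norm_riemannZeta {s : ℂ} (hs : 1 < s.re) :
    (s.re - 1) / s.re ≤ ‖riemannZeta s‖ := by
  set μ : ℕ → ℂ := fun n ↦ (ArithmeticFunction.moebius n : ℂ)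
  have hmul : riemannZeta s * LSeries μ s = 1 := by
    rw [← LSeries_one_eq_riemannZeta hs, LSeries_one_mul_Lseries_moebius hs]
  have hterm (n : ℕ) : ‖LSeries.term μ s n‖ ≤ 1 / (n : ℝ) ^ s.re := by
    have hμ : ‖μ n‖ ≤ 1 := by
      rw [norm_intCast]
      exact_mod_cast ArithmeticFunction.abs_moebius_le_one (n := n)
    rw [LSeries.norm_term_eq]
    split_ifs
    · positivity
    · gcongr
  have hμ : ‖LSeries μ s‖ ≤ s.re / (s.re - 1) :=
    (tsum_of_norm_bounded (Real.summable_one_div_nat_rpow.2 hs).hasSum hterm).trans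
      (tsum_one_div_nat_rpow_le hs)
  rw [← inv_div, inv_le_iff_one_le_mul₀ (div_pos (by linarith) (by linarith))]
  calc (1 : ℝ) = ‖riemannZeta s‖ * ‖LSeries μ s‖ := by rw [← norm_mul, hmul, norm_one]
    _ ≤ ‖riemannZeta s‖ * (s.re / (s.re - 1)) := by gcongr

end ZetaLowerBound

section ZetaLogDeriv

open Complex Metric

variable {s z : ℂ} {t r : ℝ}

lemma riemannZeta₁_ne_zero (hRH : RiemannHypothesis) (hs : 1 / 2 < s.re) :
    riemannZeta₁ s ≠ 0 := by
  rcases eq_or_ne s 1 with rfl | h1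
  · simp
  rw [riemannZeta₁_eq_sub_mul h1]
  refine mul_ne_zero (sub_ne_zero.2 h1) fun h0 ↦ hs.ne' (hRH s h0 ?_ h1)
  rintro ⟨n, rfl⟩
  have hre : (-2 * ((n : ℂ) + 1)).re = -2 * (n + 1) := by simp
  linarith [n.cast_nonneg (α := ℝ)]

lemma half_lt_re_of_mem_ball (hz : z ∈ ball (⟨3 / 2, t⟩ : ℂ) 1) : 1 / 2 < z.re := by
  have hre := (abs_re_le_norm _).trans_lt (mem_ball_iff_norm.1 hz)
  rw [sub_re, abs_lt] at hre
  dsimp only at hre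
  linarith [hre.1]

lemma norm_riemannZeta₁_le_mul_norm_center (hz : z ∈ ball (⟨3 / 2, t⟩ : ℂ) 1) :
    ‖riemannZeta₁ z‖ ≤ 60 * max 1 |t| * ‖riemannZeta₁ ⟨3 / 2, t⟩‖ := by
  set c : ℂ := ⟨3 / 2, t⟩ with hc
  set d : ℝ := ‖c - 1‖
  have hre : (c - 1).re = 1 / 2 := by norm_num [hc]
  have him : (c - 1).im = t := by simp [hc]
  have hd_re : 1 / 2 ≤ d := by
    simpa only [hre, abs_of_pos (one_half_pos (α := ℝ))] using abs_re_le_norm (c - 1)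
  have hd_im : |t| ≤ d := him ▸ abs_im_le_norm (c - 1)
  have hd_le : d ≤ 1 / 2 + |t| := by
    simpa only [hre, him, abs_of_pos (one_half_pos (α := ℝ))] using
      norm_le_abs_re_add_abs_im (c - 1)
  have hc1 : c ≠ 1 := fun h ↦ by norm_num [h] at hre
  have hcenter : d * (1 / 3) ≤ ‖riemannZeta₁ c‖ := by
    have hζ := sub_one_div_le_norm_riemannZeta (s := c) (by norm_num [hc])
    rw [riemannZeta₁_eq_sub_mul hc1, norm_mul]
    gcongr
    exact le_of_eq_of_le (by norm_num [hc]) hζ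
  have hz1 : ‖z - 1‖ ≤ d + 1 := by
    linarith [norm_sub_le_norm_sub_add_norm_sub z c 1, mem_ball_iff_norm.1 hz]
  have hz0 : ‖z‖ ≤ d + 2 := by
    have := norm_add_le (z - 1) 1
    rw [sub_add_cancel, norm_one] at this
    linarith
  have hzre := half_lt_re_of_mem_ball hz
  calc ‖riemannZeta₁ z‖ ≤ ‖z‖ * (1 + ‖z - 1‖ / z.re) := norm_riemannZeta₁_le (by linarith)
    _ ≤ (d + 2) * (1 + (d + 1) / (1 / 2)) := by gcongr
    _ ≤ 60 * max 1 |t| * (d * (1 / 3)) := by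
        rcases max_cases 1 |t| with ⟨hmax, h⟩ | ⟨hmax, h⟩ <;> rw [hmax] <;> nlinarith
    _ ≤ 60 * max 1 |t| * ‖riemannZeta₁ c‖ := by gcongr

theorem norm_deriv_logDeriv_riemannZeta₁_le (hRH : RiemannHypothesis) (hs : |s.re - 3 / 2| ≤ r)
    (hr : r < 1) :
    ‖deriv (logDeriv riemannZeta₁) s‖ ≤ 4 * Real.log (60 * max 1 |s.im|) / (1 - r) ^ 3 := by
  have hcenter : ‖s - ⟨3 / 2, s.im⟩‖ ≤ r := by
    have : s - ⟨3 / 2, s.im⟩ = (s.re - 3 / 2 : ℝ) := by apply Complex.ext <;> simp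
    rwa [this, norm_real]
  have h := norm_iteratedDeriv_logDeriv_le 1 differentiable_riemannZeta₁.differentiableOn
    (fun z hz ↦ riemannZeta₁_ne_zero hRH (half_lt_re_of_mem_ball hz))
    (fun z hz ↦ norm_riemannZeta₁_le_mul_norm_center hz) hcenter hr
  rw [iteratedDeriv_one] at h
  refine h.trans_eq ?_
  norm_num [Nat.factorial]

lemma log_sixty_mul_le {τ : ℝ} (hτ : 1 ≤ τ) :
    Real.log (60 * τ) ≤ 4.1 * τ ^ (1 / 4 : ℝ) := by
  have hq : 1 ≤ τ ^ (1 / 4 : ℝ) := Real.one_le_rpow hτ (by norm_num)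
  have hlog60 : Real.log 60 ≤ 4.1 := by
    have hle : Real.log 60 ≤ Real.log (2 ^ 6) - 1 / 16 := by
      have h := Real.log_le_sub_one_of_pos (show (0 : ℝ) < 60 / 2 ^ 6 by norm_num)
      rw [Real.log_div (by norm_num) (by norm_num)] at h
      linarith
    rw [Real.log_pow] at hle
    push_cast at hle
    linarith [Real.log_two_lt_d9]
  have hlogτ : Real.log τ = 4 * Real.log (τ ^ (1 / 4 : ℝ)) := by
    rw [Real.log_rpow (by linarith)]
    ring
  rw [Real.log_mul (by norm_num) (by linarith), hlogτ]
  linarith [Real.log_le_sub_one_of_pos (one_pos.trans_le hq)]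

lemma norm_deriv_logDeriv_riemannZeta₁_one_add_sub_le (hRH : RiemannHypothesis)
    (hs : s.re ∈ Set.Icc (-(2 / 5)) (1 / 2)) :
    ‖deriv (logDeriv riemannZeta₁) (1 + s) - deriv (logDeriv riemannZeta₁) 1‖ ≤
      17000 * max 1 |s.im| ^ (1 / 4 : ℝ) := by
  set τ : ℝ := max 1 |s.im|
  have hτ : 1 ≤ τ := le_max_left _ _
  have hs' :
      ‖deriv (logDeriv riemannZeta₁) (1 + s)‖ ≤ 4 * Real.log (60 * τ) / (1 - 9 / 10) ^ 3 := by
    simpa [τ] using norm_deriv_logDeriv_riemannZeta₁_le (s := 1 + s) (r := 9 / 10) hRH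
      (by rw [add_re, one_re, abs_le]; constructor <;> linarith [hs.1, hs.2]) (by norm_num)
  have h1 : ‖deriv (logDeriv riemannZeta₁) 1‖ ≤ 4 * Real.log (60 * 1) / (1 - 1 / 2) ^ 3 := by
    simpa using norm_deriv_logDeriv_riemannZeta₁_le (s := 1) (r := 1 / 2) hRH
      (by norm_num [abs_of_neg]) (by norm_num)
  have hlog1 : Real.log (60 * 1) ≤ 4.1 := by simpa using log_sixty_mul_le le_rfl
  refine (norm_sub_le _ _).trans ?_
  norm_num at hs' h1
  linarith [log_sixty_mul_le hτ, Real.one_le_rpow hτ (show (0 : ℝ) ≤ 1 / 4 by norm_num)]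

end ZetaLogDeriv

section LogDerivAtOne

open Set Filter Complex MeasureTheory

lemma integral_log_sub_one_div_sq :
    IntegrableOn (fun t : ℝ ↦ (Real.log t - 1) / t ^ 2) (Ioi (Real.exp 1)) ∧
      ∫ t in Ioi (Real.exp 1), (Real.log t - 1) / t ^ 2 = Real.exp (-1) := by
  have hderiv : ∀ t ∈ Ici (Real.exp 1),
      HasDerivAt (fun t ↦ -(Real.log t / t)) ((Real.log t - 1) / t ^ 2) t := fun t ht ↦ by
    have ht0 : t ≠ 0 := ((Real.exp_pos 1).trans_le ht).ne'
    refine (((Real.hasDerivAt_log ht0).div (hasDerivAt_id t) ht0).neg).congr_deriv ?_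
    rw [id, inv_mul_cancel₀ ht0, mul_one, ← neg_div, neg_sub]
  have hnonneg : ∀ t ∈ Ioi (Real.exp 1), 0 ≤ (Real.log t - 1) / t ^ 2 := fun t ht ↦ by
    have := (Real.le_log_iff_exp_le ((Real.exp_pos 1).trans ht)).2 (le_of_lt ht)
    exact div_nonneg (by linarith) (by positivity)
  have hlim : Tendsto (fun t ↦ -(Real.log t / t)) atTop (nhds 0) := by
    simpa using Real.isLittleO_log_id_atTop.tendsto_div_nhds_zero.neg
  refine ⟨integrableOn_Ioi_deriv_of_nonneg' hderiv hnonneg hlim, ?_⟩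
  rw [integral_Ioi_of_hasDerivAt_of_nonneg' hderiv hnonneg hlim, Real.log_exp, Real.exp_neg]
  ring

lemma re_cpow_smul_log_sub_fractTail_le {t : ℝ} (ht : 0 < t) :
    ((t : ℂ) ^ (-1 - 1 : ℂ) • (Real.log t • fractTail t) -
        (t : ℂ) ^ (-1 - 1 : ℂ) • fractTail t).re ≤
      (Ioi (Real.exp 1)).indicator (fun t ↦ (Real.log t - 1) / t ^ 2) t := by
  have hcpow : (t : ℂ) ^ (-1 - 1 : ℂ) = ((t ^ 2)⁻¹ : ℝ) := by
    rw [show (-1 - 1 : ℂ) = -((2 : ℕ) : ℂ) by norm_num, cpow_neg, cpow_natCast, ofReal_inv,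
      ofReal_pow]
  have hleft : ((t : ℂ) ^ (-1 - 1 : ℂ) • (Real.log t • fractTail t) -
      (t : ℂ) ^ (-1 - 1 : ℂ) • fractTail t).re =
        (Ioi 1).indicator (fun t ↦ Int.fract t * ((Real.log t - 1) / t ^ 2)) t := by
    by_cases h : t ∈ Ioi (1 : ℝ)
    · rw [fractTail, indicator_of_mem h, indicator_of_mem h, hcpow, smul_eq_mul, smul_eq_mul,
        real_smul, ← ofReal_mul, ← ofReal_mul, ← ofReal_mul, ← ofReal_sub, ofReal_re]
      ring
    · simp [fractTail, h]
  rw [hleft]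
  by_cases he : t ∈ Ioi (Real.exp 1)
  · have hlog := (Real.le_log_iff_exp_le ht).2 (le_of_lt he)
    have he1 : t ∈ Ioi 1 := (Real.one_lt_exp_iff.2 one_pos).trans he
    rw [indicator_of_mem he, indicator_of_mem he1]
    exact mul_le_of_le_one_left (div_nonneg (by linarith) (by positivity)) (Int.fract_lt_one t).le
  · have hlog := (Real.log_le_iff_le_exp ht).2 (not_lt.1 he)
    rw [indicator_of_notMem he]
    exact indicator_apply_le' (fun _ ↦ mul_nonpos_of_nonneg_of_nonpos (Int.fract_nonneg t) <|
      div_nonpos_of_nonpos_of_nonneg (by linarith) (by positivity)) fun _ ↦ le_rfl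

lemma re_mellin_log_sub_mellin_fractTail_le :
    (mellin (fun t ↦ Real.log t • fractTail t) (-1) - mellin fractTail (-1)).re ≤
      Real.exp (-1) := by
  have hlog := (hasDerivAt_mellin_fractTail (s := -1) (by simp)).1
  have hfract := mellinConvergent_fractTail (s := -1) (by simp)
  obtain ⟨hint, hval⟩ := integral_log_sub_one_div_sq
  have hsub : Ioi (Real.exp 1) ⊆ Ioi 0 := Ioi_subset_Ioi (Real.exp_pos 1).le
  rw [mellin, mellin, ← integral_sub hlog hfract, ← hval, ← inter_eq_right.2 hsub,
    ← setIntegral_indicator measurableSet_Ioi]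
  refine (reCLM.integral_comp_comm (hlog.sub hfract)).symm.trans_le ?_
  refine setIntegral_mono_on (reCLM.integrable_comp (hlog.sub hfract))
    ((integrable_indicator_iff measurableSet_Ioi).2 hint).integrableOn measurableSet_Ioi
    fun t ht ↦ ?_
  exact re_cpow_smul_log_sub_fractTail_le ht

lemma iteratedDeriv_two_riemannZeta₁_one :
    iteratedDeriv 2 riemannZeta₁ 1 =
      2 * (mellin (fun t ↦ Real.log t • fractTail t) (-1) - mellin fractTail (-1)) := by
  set m : ℂ → ℂ := fun z ↦ mellin fractTail (-z)
  have hnhds : {z : ℂ | 0 < z.re} ∈ nhds 1 :=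
    (isOpen_lt continuous_const continuous_re).mem_nhds (by simp)
  have hderiv {z : ℂ} (hz : 0 < z.re) :
      HasDerivAt m (-mellin (fun t ↦ Real.log t • fractTail t) (-z)) z := by
    have := (hasDerivAt_mellin_fractTail (s := -z) (by simpa using hz)).2.comp z (hasDerivAt_neg z)
    rwa [mul_neg_one] at this
  have hm : ContDiffAt ℂ 2 m 1 := (analyticAt_iff_eventually_differentiableAt.2 <|
    mem_of_superset hnhds fun z hz ↦ (hderiv hz).differentiableAt).contDiffAt
  have heq : riemannZeta₁ =ᶠ[nhds 1] fun z ↦ z - (z ^ 2 - z) * m z := by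
    filter_upwards [hnhds] with z hz
    rw [riemannZeta₁_eq_sub_mul_mellin hz]
    ring
  have hpoly : ContDiffAt ℂ 2 (fun z : ℂ ↦ z ^ 2 - z) 1 := by fun_prop
  have hpoly1 : iteratedDeriv 1 (fun z : ℂ ↦ z ^ 2 - z) 1 = 1 := by
    rw [iteratedDeriv_fun_sub (by fun_prop) (by fun_prop)]
    norm_num
  have hpoly2 : iteratedDeriv 2 (fun z : ℂ ↦ z ^ 2 - z) 1 = 2 := by
    rw [iteratedDeriv_fun_sub (by fun_prop) (by fun_prop), iteratedDeriv_fun_id]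
    simp
  rw [heq.iteratedDeriv_eq 2, iteratedDeriv_fun_sub (by fun_prop) (hpoly.mul hm),
    iteratedDeriv_fun_mul hpoly hm, Finset.sum_range_succ, Finset.sum_range_succ,
    Finset.sum_range_one, hpoly1, hpoly2, iteratedDeriv_one, (hderiv (by simp)).deriv]
  simp only [iteratedDeriv_fun_id, OfNat.ofNat_ne_zero, OfNat.ofNat_ne_one, if_false,
    iteratedDeriv_zero, one_pow, sub_self, tsub_self, Nat.choose_self, Nat.choose_one_right, m]
  push_cast
  ring

lemma re_deriv_logDeriv_riemannZeta₁_one_le :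
    (deriv (logDeriv riemannZeta₁) 1).re ≤ 2 * Real.exp (-1) := by
  have hdiff : DifferentiableAt ℂ (deriv riemannZeta₁) 1 := differentiable_riemannZeta₁.deriv 1
  have hderiv : deriv (logDeriv riemannZeta₁) 1 =
      iteratedDeriv 2 riemannZeta₁ 1 - (Real.eulerMascheroniConstant : ℂ) ^ 2 := by
    refine (hdiff.hasDerivAt.div (differentiable_riemannZeta₁ 1).hasDerivAt
      (by simp)).deriv.trans ?_
    rw [riemannZeta₁_one, deriv_riemannZeta₁_one, iteratedDeriv_succ, iteratedDeriv_one]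
    ring
  rw [hderiv, iteratedDeriv_two_riemannZeta₁_one, sub_re, ← ofReal_pow, ofReal_re,
    ← ofReal_ofNat, re_ofReal_mul]
  linarith [re_mellin_log_sub_mellin_fractTail_le, sq_nonneg Real.eulerMascheroniConstant]

end LogDerivAtOne

section TruncatedPower

open Set Filter Complex MeasureTheory FourierTransform Nat

variable {σ : ℝ} {z : ℂ}

lemma norm_pow_mul_exp_neg_mul (z : ℂ) (k : ℕ) {v : ℝ} (hv : 0 ≤ v) :
    ‖(v : ℂ) ^ k * exp (-z * v)‖ = v ^ k * Real.exp (-z.re * v) := by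
  rw [norm_mul, norm_pow, norm_real, Real.norm_of_nonneg hv, norm_exp, re_mul_ofReal, neg_re]

lemma integrableOn_pow_mul_exp_neg_mul (hz : 0 < z.re) (k : ℕ) :
    IntegrableOn (fun v : ℝ ↦ (v : ℂ) ^ k * exp (-z * v)) (Ioi 0) := by
  have hreal := integrableOn_rpow_mul_exp_neg_mul_rpow (s := k)
    (by linarith [k.cast_nonneg (α := ℝ)]) one_pos hz
  refine Integrable.mono' hreal (by fun_prop) ?_
  filter_upwards [ae_restrict_mem measurableSet_Ioi] with v hv
  rw [norm_pow_mul_exp_neg_mul z k (le_of_lt hv), Real.rpow_natCast, Real.rpow_one]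

lemma integral_pow_mul_exp_neg_mul_Ioi (hz : 0 < z.re) (k : ℕ) :
    ∫ v in Ioi (0 : ℝ), (v : ℂ) ^ k * exp (-z * v) = k ! * (z ^ (k + 1))⁻¹ := by
  have hz0 : z ≠ 0 := by rintro rfl; simp at hz
  induction k with
  | zero => simpa using integral_exp_mul_complex_Ioi (a := -z) (by simpa using hz) 0
  | succ k ih =>
    have hderiv (v : ℝ) : HasDerivAt (fun v : ℝ ↦ (v : ℂ) ^ (k + 1) * exp (-z * v))
        ((k + 1) * ((v : ℂ) ^ k * exp (-z * v)) - z * ((v : ℂ) ^ (k + 1) * exp (-z * v))) v := by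
      have hexp : HasDerivAt (fun v : ℝ ↦ exp (-z * v)) (exp (-z * v) * -z) v := by
        simpa using ((hasDerivAt_id v).ofReal_comp.const_mul (-z)).cexp
      have hpow : HasDerivAt (fun v : ℝ ↦ (v : ℂ) ^ (k + 1)) ((k + 1) * (v : ℂ) ^ k) v := by
        simpa using (hasDerivAt_id v).ofReal_comp.fun_pow (k + 1)
      exact (hpow.mul hexp).congr_deriv (by ring)
    have hlim : Tendsto (fun v : ℝ ↦ (v : ℂ) ^ (k + 1) * exp (-z * v)) atTop (nhds 0) := by
      rw [tendsto_zero_iff_norm_tendsto_zero]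
      refine (tendsto_rpow_mul_exp_neg_mul_atTop_nhds_zero (k + 1 : ℕ) z.re hz).congr' ?_
      filter_upwards [eventually_ge_atTop 0] with v hv
      rw [norm_pow_mul_exp_neg_mul z _ hv, Real.rpow_natCast]
    have hk := (integrableOn_pow_mul_exp_neg_mul hz k).const_mul ((k : ℂ) + 1)
    have hk1 := (integrableOn_pow_mul_exp_neg_mul hz (k + 1)).const_mul z
    have hparts := integral_Ioi_of_hasDerivAt_of_tendsto' (a := 0) (fun v _ ↦ hderiv v)
      (hk.sub hk1) hlim
    rw [integral_sub hk hk1, integral_const_mul, integral_const_mul, ih] at hparts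
    simp only [ofReal_zero, zero_pow k.succ_ne_zero, zero_mul, sub_zero] at hparts
    rw [factorial_succ, pow_succ _ (k + 1)]
    push_cast
    field_simp
    field_simp at hparts
    linear_combination -hparts

lemma ofReal_add_mul_I_ne_zero (hσ : σ ≠ 0) (t : ℝ) : (σ : ℂ) + t * I ≠ 0 := fun h ↦ by
  simpa [hσ] using congrArg re h

lemma integrable_inv_pow_vertical_line (hσ : σ ≠ 0) (k : ℕ) :
    Integrable fun t : ℝ ↦ (((σ : ℂ) + t * I) ^ (k + 2))⁻¹ := by
  have hcont : Continuous fun t : ℝ ↦ (((σ : ℂ) + t * I) ^ (k + 2))⁻¹ :=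
    Continuous.inv₀ (by fun_prop) fun t ↦ pow_ne_zero _ (ofReal_add_mul_I_ne_zero hσ t)
  refine ((integrable_inv_one_add_sq.comp_div hσ).const_mul ((|σ| ^ (k + 2))⁻¹)).mono'
    hcont.aestronglyMeasurable (.of_forall fun t ↦ ?_)
  have hσt : |σ| ≤ ‖(σ : ℂ) + t * I‖ := by simpa using abs_re_le_norm ((σ : ℂ) + t * I)
  have hsq : ‖(σ : ℂ) + t * I‖ ^ 2 = σ ^ 2 * (1 + (t / σ) ^ 2) := by
    rw [← normSq_eq_norm_sq, normSq_add_mul_I]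
    field_simp
  rw [norm_inv, norm_pow, ← mul_inv, pow_add, pow_add, sq_abs, mul_assoc, hsq]
  have := abs_pos.2 hσ
  gcongr

lemma integrable_max_pow_mul_exp (hσ : 0 < σ) (k : ℕ) :
    Integrable fun v : ℝ ↦ ((max v 0 : ℝ) : ℂ) ^ (k + 1) * exp (-σ * v) := by
  refine ((integrableOn_pow_mul_exp_neg_mul (z := σ) hσ (k + 1)).congr_fun (fun v hv ↦ ?_)
    measurableSet_Ioi).integrable_of_forall_notMem_eq_zero fun v hv ↦ ?_
  · simp only [max_eq_left (mem_Ioi.1 hv).le]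
  · simp [max_eq_right (notMem_Ioi.1 hv)]

lemma fourier_max_pow_mul_exp (hσ : 0 < σ) (k : ℕ) (w : ℝ) :
    𝓕 (fun v : ℝ ↦ ((max v 0 : ℝ) : ℂ) ^ (k + 1) * exp (-σ * v)) w =
      (k + 1)! * (((σ : ℂ) + (2 * Real.pi * w : ℝ) * I) ^ (k + 2))⁻¹ := by
  rw [Real.fourier_real_eq_integral_exp_smul,
    ← integral_pow_mul_exp_neg_mul_Ioi (z := σ + (2 * Real.pi * w : ℝ) * I) (by simpa using hσ),
    ← setIntegral_eq_integral_of_forall_compl_eq_zero (s := Ioi 0) fun v hv ↦ by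
      simp [max_eq_right (notMem_Ioi.1 hv)]]
  refine setIntegral_congr_fun measurableSet_Ioi fun v hv ↦ ?_
  simp only [max_eq_left (mem_Ioi.1 hv).le, smul_eq_mul]
  rw [mul_left_comm, ← exp_add]
  congr 2
  push_cast
  ring

theorem integral_exp_mul_inv_pow_vertical_line (hσ : 0 < σ) (k : ℕ) (v : ℝ) :
    ∫ t : ℝ, exp ((σ + t * I) * v) * (((σ : ℂ) + t * I) ^ (k + 2))⁻¹ =
      2 * Real.pi * (((max v 0 : ℝ) : ℂ) ^ (k + 1) / (k + 1)!) := by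
  have hfourier := funext (fourier_max_pow_mul_exp hσ k)
  have hint : Integrable (𝓕 fun v : ℝ ↦ ((max v 0 : ℝ) : ℂ) ^ (k + 1) * exp (-σ * v)) := by
    rw [hfourier]
    exact ((integrable_inv_pow_vertical_line hσ.ne' k).comp_mul_left'
      Real.two_pi_pos.ne').const_mul _
  have hinv := congrFun (Continuous.fourierInv_fourier_eq (by fun_prop)
    (integrable_max_pow_mul_exp hσ k) hint) v
  have hscale := Measure.integral_comp_mul_left
    (fun t : ℝ ↦ exp ((σ + t * I) * v) * (((σ : ℂ) + t * I) ^ (k + 2))⁻¹) (2 * Real.pi)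
  have hexp : exp (-σ * v) ≠ 0 := exp_ne_zero _
  have hfact : ((k + 1)! : ℂ) ≠ 0 := cast_ne_zero.2 (factorial_ne_zero _)
  have hpi : (Real.pi : ℂ) ≠ 0 := ofReal_ne_zero.2 Real.pi_ne_zero
  have hterm (w : ℝ) : exp ((2 * Real.pi * inner ℝ w v : ℝ) * I) •
      ((k + 1)! * (((σ : ℂ) + (2 * Real.pi * w : ℝ) * I) ^ (k + 2))⁻¹) =
        (k + 1)! * exp (-σ * v) * (exp ((σ + (2 * Real.pi * w : ℝ) * I) * v) *
          (((σ : ℂ) + (2 * Real.pi * w : ℝ) * I) ^ (k + 2))⁻¹) := by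
    have : exp ((2 * Real.pi * inner ℝ w v : ℝ) * I) =
        exp (-σ * v) * exp ((σ + (2 * Real.pi * w : ℝ) * I) * v) := by
      rw [← exp_add, RCLike.inner_apply', conj_trivial]
      congr 1
      push_cast
      ring
    rw [this, smul_eq_mul]
    ring
  rw [hfourier, Real.fourierInv_eq', integral_congr_ae (.of_forall hterm), integral_const_mul,
    hscale, abs_of_pos (by positivity), real_smul] at hinv
  generalize ∫ t : ℝ, exp ((σ + t * I) * v) * (((σ : ℂ) + t * I) ^ (k + 2))⁻¹ = J at hinv ⊢
  push_cast at hinv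
  field_simp at hinv ⊢
  linear_combination hinv

end TruncatedPower

section DirichletSeriesIntegral

open Complex MeasureTheory Nat

variable {a : ℕ → ℂ} {σ : ℝ}

lemma norm_term_vertical_line (n : ℕ) (t : ℝ) :
    ‖LSeries.term a (σ + t * I) n‖ = ‖LSeries.term a σ n‖ := by
  simp [LSeries.norm_term_eq]

lemma continuous_term_vertical_line (n : ℕ) :
    Continuous fun t : ℝ ↦ LSeries.term a (σ + t * I) n := by
  rcases eq_or_ne n 0 with rfl | hn
  · simpa using continuous_const
  · have hn' : (n : ℂ) ≠ 0 := cast_ne_zero.2 hn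
    simp only [LSeries.term_of_ne_zero hn]
    exact continuous_const.div (Continuous.const_cpow (by fun_prop) (.inl hn'))
      fun t ↦ cpow_ne_zero_iff.2 (.inl hn')

lemma hasSum_integral_LSeries_mul (ha : LSeriesSummable a σ) {g : ℝ → ℂ} (hg : Integrable g) :
    HasSum (fun n ↦ ∫ t : ℝ, LSeries.term a (σ + t * I) n * g t)
      (∫ t : ℝ, LSeries a (σ + t * I) * g t) := by
  have hint (n : ℕ) : Integrable fun t : ℝ ↦ LSeries.term a (σ + t * I) n * g t :=
    hg.bdd_mul (continuous_term_vertical_line n).aestronglyMeasurable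
      (.of_forall fun t ↦ (norm_term_vertical_line n t).le)
  have hsum : Summable fun n ↦ ∫ t : ℝ, ‖LSeries.term a (σ + t * I) n * g t‖ := by
    simp only [norm_mul, norm_term_vertical_line, integral_const_mul]
    exact ha.norm.mul_right _
  simpa only [LSeries, tsum_mul_right] using
    hasSum_integral_of_summable_integral_norm hint hsum

lemma integrable_exp_mul_inv_pow_vertical_line (hσ : σ ≠ 0) (k : ℕ) (v : ℝ) :
    Integrable fun t : ℝ ↦ exp ((σ + t * I) * v) * (((σ : ℂ) + t * I) ^ (k + 2))⁻¹ := by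
  refine (integrable_inv_pow_vertical_line hσ k).bdd_mul (c := Real.exp (σ * v))
    (Continuous.aestronglyMeasurable (by fun_prop)) (.of_forall fun t ↦ ?_)
  simp [norm_exp]

lemma integral_term_mul_exp_mul_inv_sq (hσ : 0 < σ) (ha : a 0 = 0) (n : ℕ) (v : ℝ) :
    ∫ t : ℝ, LSeries.term a (σ + t * I) n * (exp ((σ + t * I) * v) * (((σ : ℂ) + t * I) ^ 2)⁻¹) =
      2 * Real.pi * (a n * (max (v - Real.log n) 0 : ℝ)) := by
  rcases eq_or_ne n 0 with rfl | hn
  · simp [ha]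
  have hn' : (n : ℂ) ≠ 0 := cast_ne_zero.2 hn
  have hterm (t : ℝ) : LSeries.term a (σ + t * I) n *
      (exp ((σ + t * I) * v) * (((σ : ℂ) + t * I) ^ 2)⁻¹) =
        a n * (exp ((σ + t * I) * (v - Real.log n : ℝ)) * (((σ : ℂ) + t * I) ^ 2)⁻¹) := by
    rw [LSeries.term_of_ne_zero hn, cpow_def_of_ne_zero hn', ← natCast_log, div_mul_eq_mul_div,
      mul_div_assoc, mul_div_right_comm, ← exp_sub]
    congr 3
    push_cast
    ring
  simp only [hterm, integral_const_mul]
  rw [integral_exp_mul_inv_pow_vertical_line hσ 0, zero_add, pow_one, factorial_one, cast_one,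
    div_one]
  ring

lemma integral_term_mul_exp_sub_exp_mul_inv_sq (hσ : 0 < σ) (ha : a 0 = 0) (n : ℕ) (v w : ℝ) :
    ∫ t : ℝ, LSeries.term a (σ + t * I) n * (exp ((σ + t * I) * v) * (((σ : ℂ) + t * I) ^ 2)⁻¹ -
        exp ((σ + t * I) * w) * (((σ : ℂ) + t * I) ^ 2)⁻¹) =
      a n * (2 * Real.pi * (max (v - Real.log n) 0 - max (w - Real.log n) 0) : ℝ) := by
  have hint (v : ℝ) := (integrable_exp_mul_inv_pow_vertical_line hσ.ne' 0 v).bdd_mul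
    (continuous_term_vertical_line (a := a) (σ := σ) n).aestronglyMeasurable
    (.of_forall fun t ↦ (norm_term_vertical_line n t).le)
  simp only [mul_sub]
  rw [integral_sub (hint v) (hint w), integral_term_mul_exp_mul_inv_sq hσ ha,
    integral_term_mul_exp_mul_inv_sq hσ ha]
  push_cast
  ring

end DirichletSeriesIntegral

section ContourShift

open Set Filter Topology Complex MeasureTheory

lemma integrable_max_one_abs_rpow_neg {r : ℝ} (hr : 1 < r) :
    Integrable fun t : ℝ ↦ max 1 |t| ^ (-r) := by
  refine ((integrable_one_add_norm (E := ℝ) (by simpa using hr)).const_mul (2 ^ r)).mono'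
    (Measurable.aestronglyMeasurable (by fun_prop)) (.of_forall fun t ↦ ?_)
  have hmax : (0 : ℝ) < max 1 |t| := by positivity
  have hle : 1 + ‖t‖ ≤ 2 * max 1 |t| := by
    rw [Real.norm_eq_abs]
    linarith [le_max_left 1 |t|, le_max_right 1 |t|]
  calc ‖max 1 |t| ^ (-r)‖ = 2 ^ r * (2 * max 1 |t|) ^ (-r) := by
        rw [Real.norm_of_nonneg (by positivity), Real.mul_rpow zero_le_two hmax.le,
          ← mul_assoc, ← Real.rpow_add two_pos, add_neg_cancel, Real.rpow_zero, one_mul]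
    _ ≤ 2 ^ r * (1 + ‖t‖) ^ (-r) := by
        gcongr 2 ^ r * ?_
        exact Real.rpow_le_rpow_of_nonpos (by positivity) hle (by linarith)

lemma integral_max_one_abs_rpow_neg {r : ℝ} (hr : 1 < r) :
    ∫ t : ℝ, max 1 |t| ^ (-r) = 2 * r / (r - 1) := by
  have hr' : r - 1 ≠ 0 := by linarith
  have hIoc : ∀ t ∈ Ioc (0 : ℝ) 1, max 1 t ^ (-r) = 1 := fun t ht ↦ by
    rw [max_eq_left ht.2, Real.one_rpow]
  have hIoi : ∀ t ∈ Ioi (1 : ℝ), max 1 t ^ (-r) = t ^ (-r) := fun t ht ↦ by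
    rw [max_eq_right (mem_Ioi.1 ht).le]
  have hint := (integrableOn_Ioi_rpow_of_lt (a := -r) (by linarith) one_pos).congr_fun
    (fun t ht ↦ (hIoi t ht).symm) measurableSet_Ioi
  have hint' : IntegrableOn (fun t : ℝ ↦ max 1 t ^ (-r)) (Ioc 0 1) :=
    (integrableOn_const (C := (1 : ℝ)) (by simp)).congr_fun (fun t ht ↦ (hIoc t ht).symm)
      measurableSet_Ioc
  rw [integral_comp_abs (f := fun t ↦ max 1 t ^ (-r)), ← Ioc_union_Ioi_eq_Ioi zero_le_one,
    setIntegral_union (Ioc_disjoint_Ioi le_rfl) measurableSet_Ioi hint' hint,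
    setIntegral_congr_fun measurableSet_Ioc hIoc, setIntegral_congr_fun measurableSet_Ioi hIoi,
    integral_Ioi_rpow_of_lt (by linarith) one_pos, Real.one_rpow]
  have hr'' : -r + 1 ≠ 0 := by linarith
  simp only [integral_const, MeasurableSet.univ, measureReal_restrict_apply, univ_inter,
    Real.volume_real_Ioc, sub_zero, zero_le_one, max_eq_left, smul_eq_mul, mul_one]
  field_simp
  ring

variable {F : ℂ → ℂ} {a b C r : ℝ}

lemma integrable_vertical_line {c : ℝ} (hr : 1 < r)
    (hF : Continuous fun t : ℝ ↦ F (c + t * I))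
    (hbound : ∀ t : ℝ, 1 ≤ |t| → ‖F (c + t * I)‖ ≤ C * |t| ^ (-r)) :
    Integrable fun t : ℝ ↦ F (c + t * I) := by
  refine hF.locallyIntegrable.integrable_of_isBigO_cocompact (.of_bound C ?_)
    ((integrable_max_one_abs_rpow_neg hr).integrableAtFilter _)
  filter_upwards [(tendsto_norm_cocompact_atTop (E := ℝ)).eventually_ge_atTop 1] with t ht
  rw [Real.norm_eq_abs] at ht
  rw [max_eq_right ht, Real.norm_of_nonneg (by positivity)]
  exact hbound t ht

lemma tendsto_integral_horizontal_segment {ε : ℝ} (hε : |ε| = 1) (hab : a ≤ b) (hr : 0 < r)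
    (hbound : ∀ s : ℂ, s.re ∈ Icc a b → 1 ≤ |s.im| → ‖F s‖ ≤ C * |s.im| ^ (-r)) :
    Tendsto (fun T : ℝ ↦ ∫ x in a..b, F (x + (ε * T : ℝ) * I)) atTop (𝓝 0) := by
  have hlim : Tendsto (fun T : ℝ ↦ C * T ^ (-r) * |b - a|) atTop (𝓝 0) := by
    simpa using ((tendsto_rpow_neg_atTop hr).const_mul C).mul_const |b - a|
  refine squeeze_zero_norm' ?_ hlim
  filter_upwards [eventually_ge_atTop 1] with T hT
  refine intervalIntegral.norm_integral_le_of_norm_le_const fun x hx ↦ ?_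
  rw [uIoc_of_le hab] at hx
  have him : |((x : ℂ) + (ε * T : ℝ) * I).im| = T := by
    simp [abs_mul, hε, abs_of_nonneg (zero_le_one.trans hT)]
  simpa only [him] using
    hbound (x + (ε * T : ℝ) * I) (by simpa using ⟨hx.1.le, hx.2⟩) (by rwa [him])

theorem integral_vertical_line_eq_of_le (hab : a ≤ b) (hr : 1 < r)
    (hF : DifferentiableOn ℂ F {s | s.re ∈ Icc a b})
    (hbound : ∀ s : ℂ, s.re ∈ Icc a b → 1 ≤ |s.im| → ‖F s‖ ≤ C * |s.im| ^ (-r)) :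
    ∫ t : ℝ, F (b + t * I) = ∫ t : ℝ, F (a + t * I) := by
  have hint : ∀ c ∈ Icc a b, Integrable fun t : ℝ ↦ F (c + t * I) := fun c hc ↦
    integrable_vertical_line hr
      (hF.continuousOn.comp_continuous (by fun_prop) fun t ↦ by simpa using hc)
      fun t ht ↦ by simpa using hbound (c + t * I) (by simpa using hc) (by simpa using ht)
  have hrect (T : ℝ) : (∫ x in a..b, F (x + (-1 * T : ℝ) * I)) -
      (∫ x in a..b, F (x + (1 * T : ℝ) * I)) + I • (∫ y in (-T)..T, F (b + y * I)) -
        I • ∫ y in (-T)..T, F (a + y * I) = 0 := by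
    rw [neg_one_mul, one_mul]
    refine integral_boundary_rect_eq_zero_of_differentiableOn F ⟨a, -T⟩ ⟨b, T⟩
      (hF.mono fun s hs ↦ ?_)
    rw [mem_reProdIm, uIcc_of_le hab] at hs
    exact hs.1
  have hlim := (((tendsto_integral_horizontal_segment (ε := -1) (by simp) hab
    (zero_lt_one.trans hr) hbound).sub (tendsto_integral_horizontal_segment (ε := 1) (by simp) hab
      (zero_lt_one.trans hr) hbound)).add
    ((intervalIntegral_tendsto_integral (hint b (right_mem_Icc.2 hab)) tendsto_neg_atTop_atBot
      tendsto_id).const_smul I)).sub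
    ((intervalIntegral_tendsto_integral (hint a (left_mem_Icc.2 hab)) tendsto_neg_atTop_atBot
      tendsto_id).const_smul I)
  have hzero := tendsto_nhds_unique (hlim.congr hrect) tendsto_const_nhds
  rw [sub_zero, zero_add, ← smul_sub, smul_eq_zero, sub_eq_zero] at hzero
  exact hzero.resolve_left I_ne_zero

end ContourShift

section Tauberian

open Set Filter Topology Complex MeasureTheory Nat

lemma norm_exp_sub_one_le_of_re_nonpos {z : ℂ} (hz : z.re ≤ 0) : ‖exp z - 1‖ ≤ ‖z‖ := by
  simpa using (convex_halfSpace_re_le 0).norm_image_sub_le_of_norm_deriv_le (𝕜 := ℂ) (f := exp)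
    (C := 1) (x := 0) (y := z) (fun w _ ↦ differentiable_exp w) (fun w hw ↦ by
      rw [Complex.deriv_exp, norm_exp]
      exact Real.exp_le_one_iff.2 hw) (by simp) hz

lemma norm_exp_sub_one_le_sqrt_of_re_nonpos {z : ℂ} (hz : z.re ≤ 0) :
    ‖exp z - 1‖ ≤ √(2 * ‖z‖) := by
  have htwo : ‖exp z - 1‖ ≤ 2 := by
    refine (norm_sub_le _ _).trans ?_
    rw [norm_exp, norm_one]
    linarith [Real.exp_le_one_iff.2 hz]
  refine Real.le_sqrt_of_sq_le ?_
  rw [sq]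
  exact mul_le_mul htwo (norm_exp_sub_one_le_of_re_nonpos hz) (norm_nonneg _) zero_le_two

lemma norm_exp_mul_sub_one_mul_inv_sq_le {s : ℂ} {δ : ℝ} (hδ : 0 ≤ δ) (hs : s.re < 0)
    (hδs : δ ≤ 2 * s.re ^ 2) :
    ‖(exp (s * δ) - 1) * (s ^ 2)⁻¹‖ ≤ √(2 * δ) * max 1 |s.im| ^ (-(3 / 2) : ℝ) := by
  have hre : (s * δ).re ≤ 0 := by
    rw [re_mul_ofReal]
    exact mul_nonpos_of_nonpos_of_nonneg hs.le hδ
  have hlin : ‖exp (s * δ) - 1‖ ≤ δ * ‖s‖ := by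
    have := norm_exp_sub_one_le_of_re_nonpos hre
    rwa [norm_mul, norm_real, Real.norm_of_nonneg hδ, mul_comm ‖s‖] at this
  have hpos : 0 < ‖s‖ := norm_pos_iff.2 fun h ↦ by simp [h] at hs
  rw [norm_mul, norm_inv, norm_pow]
  rcases le_total |s.im| 1 with him | him
  · rw [max_eq_left him, Real.one_rpow, mul_one]
    have hsqrt : δ ≤ √(2 * δ) * ‖s‖ := by
      refine (Real.le_sqrt_of_sq_le (y := 2 * δ * s.re ^ 2) (by nlinarith)).trans ?_
      rw [Real.sqrt_mul (by positivity), Real.sqrt_sq_eq_abs]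
      gcongr
      exact abs_re_le_norm s
    calc ‖exp (s * δ) - 1‖ * (‖s‖ ^ 2)⁻¹ ≤ √(2 * δ) * ‖s‖ * ‖s‖ * (‖s‖ ^ 2)⁻¹ := by
          gcongr
          exact hlin.trans (by gcongr)
      _ = √(2 * δ) := by field_simp
  · have hsqrt : ‖exp (s * δ) - 1‖ ≤ √(2 * δ) * √‖s‖ := by
      have := norm_exp_sub_one_le_sqrt_of_re_nonpos hre
      rwa [norm_mul, norm_real, Real.norm_of_nonneg hδ, mul_comm ‖s‖, ← mul_assoc,
        Real.sqrt_mul (by positivity)] at this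
    calc ‖exp (s * δ) - 1‖ * (‖s‖ ^ 2)⁻¹ ≤ √(2 * δ) * √‖s‖ * (‖s‖ ^ 2)⁻¹ := by gcongr
      _ = √(2 * δ) * ‖s‖ ^ (-(3 / 2) : ℝ) := by
        rw [Real.sqrt_eq_rpow ‖s‖, mul_assoc, ← Real.rpow_natCast ‖s‖, ← Real.rpow_neg hpos.le,
          ← Real.rpow_add hpos]
        norm_num
      _ ≤ √(2 * δ) * max 1 |s.im| ^ (-(3 / 2) : ℝ) := by
        rw [max_eq_right him]
        gcongr √(2 * δ) * ?_
        exact Real.rpow_le_rpow_of_nonpos (by linarith) (abs_im_le_norm s) (by norm_num)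

/-- The integrand `(f s - f 0) (e ^ (s (u + δ)) - e ^ (s u)) / s ^ 2` of the smoothed explicit
formula, written with `dslope` so that its removable singularity at `0` is filled in. -/
noncomputable def smoothedIntegrand (f : ℂ → ℂ) (u δ : ℝ) (s : ℂ) : ℂ :=
  dslope f 0 s * dslope (fun s ↦ exp (s * (u + δ : ℝ)) - exp (s * u)) 0 s

variable {f : ℂ → ℂ} {u δ α σ B θ : ℝ} {s : ℂ}

lemma smoothedIntegrand_of_ne (hs : s ≠ 0) :
    smoothedIntegrand f u δ s =
      (f s - f 0) * ((exp (s * (u + δ : ℝ)) - exp (s * u)) * (s ^ 2)⁻¹) := by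
  rw [smoothedIntegrand, dslope_of_ne _ hs, dslope_of_ne _ hs, slope_def_field, slope_def_field]
  simp only [zero_mul, exp_zero, sub_self, sub_zero]
  field_simp

lemma differentiableOn_smoothedIntegrand (hα : 0 < α) (hσ : 0 < σ)
    (hf : DifferentiableOn ℂ f {s | s.re ∈ Icc (-α) σ}) :
    DifferentiableOn ℂ (smoothedIntegrand f u δ) {s | s.re ∈ Icc (-α) σ} := by
  have hnhds : {s : ℂ | s.re ∈ Icc (-α) σ} ∈ 𝓝 0 :=
    continuous_re.continuousAt.preimage_mem_nhds (Icc_mem_nhds (by simpa) (by simpa))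
  exact ((differentiableOn_dslope hnhds).2 hf).mul
    ((differentiableOn_dslope hnhds).2 (by fun_prop))

lemma norm_smoothedIntegrand_le_of_one_le_abs_im (hu : 0 ≤ u) (hδ : 0 ≤ δ) (hσ : 0 ≤ σ)
    (hs : s.re ≤ σ) (him : 1 ≤ |s.im|) (hbound : ‖f s - f 0‖ ≤ B * max 1 |s.im| ^ θ) :
    ‖smoothedIntegrand f u δ s‖ ≤ 2 * B * Real.exp (σ * (u + δ)) * |s.im| ^ (-(2 - θ)) := by
  have him' : 0 < |s.im| := one_pos.trans_le him
  have hexp {v : ℝ} (hv : 0 ≤ v) (hvu : v ≤ u + δ) :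
      ‖exp (s * v)‖ ≤ Real.exp (σ * (u + δ)) := by
    rw [norm_exp, re_mul_ofReal]
    gcongr
  have hsub : ‖exp (s * (u + δ : ℝ)) - exp (s * u)‖ ≤ 2 * Real.exp (σ * (u + δ)) := by
    refine (norm_sub_le _ _).trans ?_
    linarith [hexp (add_nonneg hu hδ) le_rfl, hexp hu (by linarith)]
  rw [max_eq_right him] at hbound
  rw [smoothedIntegrand_of_ne fun h ↦ by norm_num [h] at him, norm_mul, norm_mul, norm_inv,
    norm_pow]
  calc ‖f s - f 0‖ * (‖exp (s * (u + δ : ℝ)) - exp (s * u)‖ * (‖s‖ ^ 2)⁻¹)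
      ≤ B * |s.im| ^ θ * (2 * Real.exp (σ * (u + δ)) * (|s.im| ^ 2)⁻¹) := by
        gcongr
        · exact (norm_nonneg _).trans hbound
        · exact abs_im_le_norm s
    _ = 2 * B * Real.exp (σ * (u + δ)) * (|s.im| ^ θ * (|s.im| ^ 2)⁻¹) := by ring
    _ = 2 * B * Real.exp (σ * (u + δ)) * |s.im| ^ (-(2 - θ)) := by
        rw [← Real.rpow_natCast, ← Real.rpow_neg him'.le, ← Real.rpow_add him']
        congr 2
        push_cast
        ring

lemma norm_smoothedIntegrand_le_of_re_neg (hδ : 0 ≤ δ) (hs : s.re < 0)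
    (hδs : δ ≤ 2 * s.re ^ 2) (hbound : ‖f s - f 0‖ ≤ B * max 1 |s.im| ^ θ) :
    ‖smoothedIntegrand f u δ s‖ ≤
      B * Real.exp (s.re * u) * √(2 * δ) * max 1 |s.im| ^ (-(3 / 2 - θ)) := by
  have hmax : (0 : ℝ) < max 1 |s.im| := by positivity
  have hfactor : (exp (s * (u + δ : ℝ)) - exp (s * u)) * (s ^ 2)⁻¹ =
      exp (s * u) * ((exp (s * δ) - 1) * (s ^ 2)⁻¹) := by
    rw [ofReal_add, mul_add, exp_add]
    ring
  rw [smoothedIntegrand_of_ne fun h ↦ by simp [h] at hs, hfactor, norm_mul, norm_mul, norm_exp,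
    re_mul_ofReal]
  calc ‖f s - f 0‖ * (Real.exp (s.re * u) * ‖(exp (s * δ) - 1) * (s ^ 2)⁻¹‖)
      ≤ B * max 1 |s.im| ^ θ *
        (Real.exp (s.re * u) * (√(2 * δ) * max 1 |s.im| ^ (-(3 / 2) : ℝ))) := by
        gcongr
        · exact (norm_nonneg _).trans hbound
        · exact norm_exp_mul_sub_one_mul_inv_sq_le hδ hs hδs
    _ = B * Real.exp (s.re * u) * √(2 * δ) *
        (max 1 |s.im| ^ θ * max 1 |s.im| ^ (-(3 / 2) : ℝ)) := by ring
    _ = B * Real.exp (s.re * u) * √(2 * δ) * max 1 |s.im| ^ (-(3 / 2 - θ)) := by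
        rw [← Real.rpow_add hmax]
        congr 2
        ring

lemma integrable_smoothedIntegrand (hα : 0 < α) (hσ : 0 < σ) (hθ : θ < 1 / 2)
    (hf : DifferentiableOn ℂ f {s | s.re ∈ Icc (-α) σ})
    (hbound : ∀ s : ℂ, s.re ∈ Icc (-α) σ → ‖f s - f 0‖ ≤ B * max 1 |s.im| ^ θ)
    (hu : 0 ≤ u) (hδ : 0 ≤ δ) :
    Integrable fun t : ℝ ↦ smoothedIntegrand f u δ (σ + t * I) := by
  have hmem (t : ℝ) : ((σ : ℂ) + t * I).re ∈ Icc (-α) σ := by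
    simpa using (neg_lt_zero.2 hα).le.trans hσ.le
  refine integrable_vertical_line (r := 2 - θ) (C := 2 * B * Real.exp (σ * (u + δ)))
    (by linarith) ((differentiableOn_smoothedIntegrand hα hσ hf).continuousOn.comp_continuous
      (by fun_prop) hmem) fun t ht ↦ ?_
  simpa using norm_smoothedIntegrand_le_of_one_le_abs_im hu hδ hσ.le (hmem t).2
    (by simpa using ht) (hbound _ (hmem t))

lemma norm_integral_smoothedIntegrand_le (hα : 0 < α) (hσ : 0 < σ) (hθ : θ < 1 / 2)
    (hf : DifferentiableOn ℂ f {s | s.re ∈ Icc (-α) σ})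
    (hbound : ∀ s : ℂ, s.re ∈ Icc (-α) σ → ‖f s - f 0‖ ≤ B * max 1 |s.im| ^ θ)
    (hu : 0 ≤ u) (hδ : 0 ≤ δ) (hδα : δ ≤ 2 * α ^ 2) :
    ‖∫ t : ℝ, smoothedIntegrand f u δ (σ + t * I)‖ ≤
      B * Real.exp (-α * u) * √(2 * δ) * (2 * (3 - 2 * θ) / (1 - 2 * θ)) := by
  rw [integral_vertical_line_eq_of_le (a := -α) (by linarith) (by linarith)
    (differentiableOn_smoothedIntegrand hα hσ hf) fun s hs him ↦
      norm_smoothedIntegrand_le_of_one_le_abs_im hu hδ hσ.le hs.2 him (hbound s hs)]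
  have hle (t : ℝ) : ‖smoothedIntegrand f u δ ((-α : ℝ) + t * I)‖ ≤
      B * Real.exp (-α * u) * √(2 * δ) * max 1 |t| ^ (-(3 / 2 - θ)) := by
    simpa using norm_smoothedIntegrand_le_of_re_neg (s := (-α : ℝ) + t * I) hδ (by simpa)
      (by simpa) (hbound _ (by simpa using (neg_lt_zero.2 hα).le.trans hσ.le))
  refine (norm_integral_le_of_norm_le
    ((integrable_max_one_abs_rpow_neg (by linarith)).const_mul _) (.of_forall hle)).trans_eq ?_
  rw [integral_const_mul, integral_max_one_abs_rpow_neg (by linarith)]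
  congr 1
  rw [div_eq_div_iff (by linarith) (by linarith)]
  ring

lemma integral_LSeries_mul_exp_sub_exp {a : ℕ → ℂ} (hα : 0 < α) (hσ : 0 < σ) (hθ : θ < 1 / 2)
    (ha : ∀ t : ℝ, LSeries a (σ + t * I) = f (σ + t * I) + (((σ : ℂ) + t * I) ^ 2)⁻¹)
    (hf : DifferentiableOn ℂ f {s | s.re ∈ Icc (-α) σ})
    (hbound : ∀ s : ℂ, s.re ∈ Icc (-α) σ → ‖f s - f 0‖ ≤ B * max 1 |s.im| ^ θ)
    (hu : 0 ≤ u) (hδ : 0 ≤ δ) :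
    ∫ t : ℝ, LSeries a (σ + t * I) *
        (exp ((σ + t * I) * (u + δ : ℝ)) * (((σ : ℂ) + t * I) ^ 2)⁻¹ -
          exp ((σ + t * I) * u) * (((σ : ℂ) + t * I) ^ 2)⁻¹) =
      (2 * Real.pi * (((u + δ) ^ 3 - u ^ 3) / 6) : ℝ) + (2 * Real.pi * δ : ℝ) * f 0 +
        ∫ t : ℝ, smoothedIntegrand f u δ (σ + t * I) := by
  have hsplit (t : ℝ) : LSeries a (σ + t * I) *
        (exp ((σ + t * I) * (u + δ : ℝ)) * (((σ : ℂ) + t * I) ^ 2)⁻¹ -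
          exp ((σ + t * I) * u) * (((σ : ℂ) + t * I) ^ 2)⁻¹) =
      (exp ((σ + t * I) * (u + δ : ℝ)) * (((σ : ℂ) + t * I) ^ (2 + 2))⁻¹ -
        exp ((σ + t * I) * u) * (((σ : ℂ) + t * I) ^ (2 + 2))⁻¹) +
      f 0 * (exp ((σ + t * I) * (u + δ : ℝ)) * (((σ : ℂ) + t * I) ^ (0 + 2))⁻¹ -
        exp ((σ + t * I) * u) * (((σ : ℂ) + t * I) ^ (0 + 2))⁻¹) +
      smoothedIntegrand f u δ (σ + t * I) := by
    rw [ha, smoothedIntegrand_of_ne (ofReal_add_mul_I_ne_zero hσ.ne' t), zero_add, pow_add,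
      mul_inv]
    ring
  have hint := integrable_exp_mul_inv_pow_vertical_line hσ.ne'
  have hquad := (hint 2 (u + δ)).sub (hint 2 u)
  have hlin := ((hint 0 (u + δ)).sub (hint 0 u)).const_mul (f 0)
  have hrest := integrable_smoothedIntegrand hα hσ hθ hf hbound hu hδ
  rw [integral_congr_ae (.of_forall hsplit)]
  refine (integral_add (hquad.add hlin) hrest).trans ?_
  rw [integral_add' hquad hlin, integral_const_mul, integral_sub' (hint 2 _) (hint 2 _)]
  simp only [Pi.sub_apply]
  rw [integral_sub (hint 0 _) (hint 0 _)]
  simp only [integral_exp_mul_inv_pow_vertical_line hσ, max_eq_left hu,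
    max_eq_left (add_nonneg hu hδ)]
  push_cast [Nat.factorial]
  ring

lemma hasSum_mul_max_sub_max {a : ℕ → ℝ} (hα : 0 < α) (hσ : 0 < σ) (hθ : θ < 1 / 2)
    (ha_zero : a 0 = 0) (ha_summable : LSeriesSummable (fun n ↦ (a n : ℂ)) σ)
    (ha : ∀ t : ℝ, LSeries (fun n ↦ (a n : ℂ)) (σ + t * I) =
      f (σ + t * I) + (((σ : ℂ) + t * I) ^ 2)⁻¹)
    (hf : DifferentiableOn ℂ f {s | s.re ∈ Icc (-α) σ})
    (hbound : ∀ s : ℂ, s.re ∈ Icc (-α) σ → ‖f s - f 0‖ ≤ B * max 1 |s.im| ^ θ)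
    (hu : 0 ≤ u) (hδ : 0 ≤ δ) :
    HasSum (fun n ↦ a n * (2 * Real.pi * (max (u + δ - Real.log n) 0 - max (u - Real.log n) 0)))
      (2 * Real.pi * (((u + δ) ^ 3 - u ^ 3) / 6) + 2 * Real.pi * δ * (f 0).re +
        (∫ t : ℝ, smoothedIntegrand f u δ (σ + t * I)).re) := by
  have hsum := hasSum_re (hasSum_integral_LSeries_mul ha_summable
    ((integrable_exp_mul_inv_pow_vertical_line hσ.ne' 0 (u + δ)).sub
      (integrable_exp_mul_inv_pow_vertical_line hσ.ne' 0 u)))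
  simpa only [zero_add, Pi.sub_apply,
    integral_term_mul_exp_sub_exp_mul_inv_sq (a := fun n ↦ (a n : ℂ)) hσ
      (ofReal_eq_zero.2 ha_zero),
    integral_LSeries_mul_exp_sub_exp hα hσ hθ ha hf hbound hu hδ, add_re, re_ofReal_mul,
    ofReal_re] using hsum

theorem sum_le_of_LSeries_eq {a : ℕ → ℝ} (hα : 0 < α) (hσ : 0 < σ) (hθ : θ < 1 / 2)
    (ha_zero : a 0 = 0) (ha_nonneg : ∀ n, 0 ≤ a n)
    (ha_summable : LSeriesSummable (fun n ↦ (a n : ℂ)) σ)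
    (ha : ∀ t : ℝ, LSeries (fun n ↦ (a n : ℂ)) (σ + t * I) =
      f (σ + t * I) + (((σ : ℂ) + t * I) ^ 2)⁻¹)
    (hf : DifferentiableOn ℂ f {s | s.re ∈ Icc (-α) σ})
    (hbound : ∀ s : ℂ, s.re ∈ Icc (-α) σ → ‖f s - f 0‖ ≤ B * max 1 |s.im| ^ θ)
    {x : ℝ} (hx : 1 ≤ x) (hδ : 0 < δ) (hδα : δ ≤ 2 * α ^ 2) :
    ∑ n ∈ Finset.Iic ⌊x⌋₊, a n ≤ ((Real.log x + δ) ^ 3 - Real.log x ^ 3) / (6 * δ) + (f 0).re +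
      B / (2 * Real.pi) * x ^ (-α) * √(2 / δ) * (2 * (3 - 2 * θ) / (1 - 2 * θ)) := by
  set u := Real.log x with hux
  have hu : 0 ≤ u := Real.log_nonneg hx
  have hx0 : 0 < x := one_pos.trans_le hx
  have hweight_nonneg (n : ℕ) : 0 ≤ max (u + δ - Real.log n) 0 - max (u - Real.log n) 0 :=
    sub_nonneg.2 (max_le_max (by linarith) le_rfl)
  have hweight : ∀ n ∈ Finset.Iic ⌊x⌋₊,
      max (u + δ - Real.log n) 0 - max (u - Real.log n) 0 = δ := fun n hn ↦ by
    have hlog : Real.log n ≤ u := by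
      rcases n.eq_zero_or_pos with rfl | hpos
      · simpa using hu
      · exact Real.log_le_log (mod_cast hpos) ((le_floor_iff hx0.le).1 (Finset.mem_Iic.1 hn))
    rw [max_eq_left (by linarith), max_eq_left (by linarith)]
    ring
  have hle := sum_le_hasSum (Finset.Iic ⌊x⌋₊)
    (fun n _ ↦ mul_nonneg (ha_nonneg n) (mul_nonneg Real.two_pi_pos.le (hweight_nonneg n)))
    (hasSum_mul_max_sub_max hα hσ hθ ha_zero ha_summable ha hf hbound hu hδ.le)
  rw [Finset.sum_congr rfl fun n hn ↦ by rw [hweight n hn], ← Finset.sum_mul] at hle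
  have hrest := (re_le_norm _).trans
    (norm_integral_smoothedIntegrand_le hα hσ hθ hf hbound hu hδ.le hδα)
  have hsqrt : √(2 * δ) = δ * √(2 / δ) := by
    rw [show 2 * δ = δ ^ 2 * (2 / δ) by field_simp, Real.sqrt_mul (sq_nonneg δ),
      Real.sqrt_sq hδ.le]
  rw [hsqrt, mul_comm (-α), hux, ← Real.rpow_def_of_pos hx0] at hrest
  refine le_of_mul_le_mul_right ((hle.trans (add_le_add_right hrest _)).trans_eq ?_)
    (mul_pos Real.two_pi_pos hδ)
  field_simp

end Tauberian

section VonMangoldt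

open Set Filter Topology Complex ArithmeticFunction

variable {s : ℂ}

lemma abscissaOfAbsConv_vonMangoldt_le :
    LSeries.abscissaOfAbsConv (fun n ↦ (Λ n : ℂ)) ≤ (1 : ℝ) :=
  LSeries.abscissaOfAbsConv_le_of_forall_lt_LSeriesSummable fun y hy ↦
    LSeriesSummable_vonMangoldt (by simpa using hy)

lemma term_log_mul_vonMangoldt_div (s : ℂ) (n : ℕ) :
    LSeries.term (fun n ↦ ((Λ n * Real.log n / n : ℝ) : ℂ)) s n =
      LSeries.term (LSeries.logMul fun n ↦ (Λ n : ℂ)) (1 + s) n := by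
  rcases eq_or_ne n 0 with rfl | hn
  · simp
  · rw [LSeries.term_of_ne_zero hn, LSeries.term_of_ne_zero hn, LSeries.logMul, ← natCast_log,
      cpow_add _ _ (Nat.cast_ne_zero.2 hn), cpow_one, div_mul_eq_div_div]
    push_cast
    ring

lemma LSeriesSummable_log_mul_vonMangoldt_div (hs : 0 < s.re) :
    LSeriesSummable (fun n ↦ ((Λ n * Real.log n / n : ℝ) : ℂ)) s := by
  have hre : (1 : ℝ) < (1 + s).re := by simpa using hs
  simpa only [LSeriesSummable, funext (term_log_mul_vonMangoldt_div s)] using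
    LSeriesSummable_logMul_of_lt_re
      (abscissaOfAbsConv_vonMangoldt_le.trans_lt (EReal.coe_lt_coe_iff.2 hre))

lemma LSeries_vonMangoldt_eq_inv_sub_logDeriv (hs : 1 < s.re) :
    LSeries (fun n ↦ (Λ n : ℂ)) s = (s - 1)⁻¹ - logDeriv riemannZeta₁ s := by
  have hs1 : s ≠ 1 := by rintro rfl; simp at hs
  have heq : riemannZeta₁ =ᶠ[𝓝 s] fun z ↦ (z - 1) * riemannZeta z := by
    filter_upwards [isOpen_ne.mem_nhds hs1] with z hz using riemannZeta₁_eq_sub_mul hz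
  have hlog : logDeriv riemannZeta₁ s = logDeriv (fun z ↦ (z - 1) * riemannZeta z) s := by
    rw [logDeriv_apply, logDeriv_apply, heq.deriv_eq, heq.eq_of_nhds]
  rw [LSeries_vonMangoldt_eq_deriv_riemannZeta_div hs, hlog,
    logDeriv_mul (f := fun z ↦ z - 1) s (sub_ne_zero.2 hs1)
      (riemannZeta_ne_zero_of_one_lt_re hs) (by fun_prop) (differentiableAt_riemannZeta hs1),
    logDeriv_apply, logDeriv_apply, deriv_sub_const, deriv_id'']
  ring

lemma LSeries_logMul_vonMangoldt (hs : 1 < s.re) :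
    LSeries (LSeries.logMul fun n ↦ (Λ n : ℂ)) s =
      deriv (logDeriv riemannZeta₁) s + ((s - 1) ^ 2)⁻¹ := by
  have hs1 : s ≠ 1 := by rintro rfl; simp at hs
  have hne : riemannZeta₁ s ≠ 0 := by
    rw [riemannZeta₁_eq_sub_mul hs1]
    exact mul_ne_zero (sub_ne_zero.2 hs1) (riemannZeta_ne_zero_of_one_lt_re hs)
  have hdiff : DifferentiableAt ℂ (logDeriv riemannZeta₁) s :=
    (differentiable_riemannZeta₁.deriv s).div (differentiable_riemannZeta₁ s) hne
  have heq : LSeries (fun n ↦ (Λ n : ℂ)) =ᶠ[𝓝 s] fun z ↦ (z - 1)⁻¹ - logDeriv riemannZeta₁ z := by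
    filter_upwards [(isOpen_lt continuous_const continuous_re).mem_nhds hs] with z hz
      using LSeries_vonMangoldt_eq_inv_sub_logDeriv hz
  have hderiv := LSeries_deriv (abscissaOfAbsConv_vonMangoldt_le.trans_lt
    (EReal.coe_lt_coe_iff.2 hs))
  rw [heq.deriv_eq, ((((hasDerivAt_id' s).sub_const 1).fun_inv (sub_ne_zero.2 hs1)).fun_sub
    hdiff.hasDerivAt).deriv] at hderiv
  rw [← neg_eq_iff_eq_neg.2 hderiv, neg_div, one_div]
  ring

lemma LSeries_log_mul_vonMangoldt_div (hs : 0 < s.re) :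
    LSeries (fun n ↦ ((Λ n * Real.log n / n : ℝ) : ℂ)) s =
      deriv (logDeriv riemannZeta₁) (1 + s) + (s ^ 2)⁻¹ := by
  rw [LSeries, funext (term_log_mul_vonMangoldt_div s), ← LSeries,
    LSeries_logMul_vonMangoldt (by simpa using hs), add_sub_cancel_left]

lemma differentiableOn_deriv_logDeriv_riemannZeta₁_one_add (hRH : RiemannHypothesis) :
    DifferentiableOn ℂ (fun s ↦ deriv (logDeriv riemannZeta₁) (1 + s)) {s | -(1 / 2) < s.re} := by
  have hlog : DifferentiableOn ℂ (logDeriv riemannZeta₁) {s | 1 / 2 < s.re} := fun s hs ↦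
    ((differentiable_riemannZeta₁.deriv s).div (differentiable_riemannZeta₁ s)
      (riemannZeta₁_ne_zero hRH hs)).differentiableWithinAt
  refine (hlog.deriv (isOpen_lt continuous_const continuous_re)).comp (by fun_prop) fun s hs ↦ ?_
  rw [mem_ofPred_eq] at hs ⊢
  rw [add_re, one_re]
  linarith

theorem sum_vonMangoldt_mul_log_div_le (hRH : RiemannHypothesis) {x δ : ℝ} (hx : 1 ≤ x)
    (hδ : 0 < δ) (hδ' : δ ≤ 8 / 25) :
    ∑ n ∈ Finset.Iic ⌊x⌋₊, Λ n * Real.log n / n ≤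
      ((Real.log x + δ) ^ 3 - Real.log x ^ 3) / (6 * δ) + 2 * Real.exp (-1) +
        85000 / Real.pi * x ^ (-(2 / 5) : ℝ) * √(2 / δ) := by
  have hmain := sum_le_of_LSeries_eq (a := fun n ↦ Λ n * Real.log n / n)
    (f := fun s ↦ deriv (logDeriv riemannZeta₁) (1 + s)) (α := 2 / 5) (σ := 1 / 2) (θ := 1 / 4)
    (B := 17000) (by norm_num) (by norm_num) (by norm_num) (by simp)
    (fun n ↦ div_nonneg (mul_nonneg vonMangoldt_nonneg (Real.log_natCast_nonneg n)) n.cast_nonneg)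
    (LSeriesSummable_log_mul_vonMangoldt_div (by norm_num))
    (fun t ↦ LSeries_log_mul_vonMangoldt_div (by simp))
    ((differentiableOn_deriv_logDeriv_riemannZeta₁_one_add hRH).mono fun s hs ↦ by
      rw [mem_ofPred_eq] at hs ⊢
      linarith [hs.1])
    (fun s hs ↦ by
      simpa only [add_zero] using norm_deriv_logDeriv_riemannZeta₁_one_add_sub_le hRH hs)
    hx hδ (by linarith)
  rw [add_zero] at hmain
  refine hmain.trans ?_
  have hone := re_deriv_logDeriv_riemannZeta₁_one_le
  have hconst (y : ℝ) : 17000 / (2 * Real.pi) * y * √(2 / δ) *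
      (2 * (3 - 2 * (1 / 4)) / (1 - 2 * (1 / 4))) = 85000 / Real.pi * y * √(2 / δ) := by
    field_simp
    ring
  rw [hconst]
  gcongr

end VonMangoldt

section MainBound

open ArithmeticFunction

lemma rpow_neg_mul_add_log_le {x : ℝ} (hx : 10 ^ 13 ≤ x) :
    x ^ (-(2 / 5) : ℝ) * (32 + Real.log x) ≤ 1 / 2400 := by
  have hx0 : 0 < x := by linarith
  set w := x ^ (2 / 5 : ℝ) with hw
  have hw0 : 0 < w := Real.rpow_pos_of_pos hx0 _
  have hw5 : w ^ 5 = x ^ 2 := by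
    rw [hw, ← Real.rpow_mul_natCast hx0.le, ← Real.rpow_natCast x]
    norm_num
  have hw_ge : 158000 ≤ w := by
    refine le_of_pow_le_pow_left₀ (n := 5) (by norm_num) hw0.le ?_
    rw [hw5]
    exact le_trans (by norm_num) (pow_le_pow_left₀ (by norm_num) hx 2)
  have hlog : Real.log x = 5 / 2 * (Real.log (w / 2 ^ 17) + 17 * Real.log 2) := by
    rw [Real.log_div hw0.ne' (by norm_num), Real.log_pow, hw, Real.log_rpow hx0]
    push_cast
    ring
  have htangent := Real.log_le_sub_one_of_pos (show 0 < w / 2 ^ 17 by positivity)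
  rw [Real.rpow_neg hx0.le, ← hw, inv_mul_le_iff₀ hw0]
  linarith [Real.log_two_lt_d9]

lemma rpow_neg_mul_sqrt_log_le {x : ℝ} (hx : 10 ^ 13 ≤ x) :
    85000 / Real.pi * x ^ (-(2 / 5) : ℝ) * √(2 / (4 / Real.log x)) ≤ 0.706 := by
  have hlog : 0 < Real.log x := Real.log_pos (by linarith)
  have : 0 < x := by linarith
  have hπ : 85000 / Real.pi ≤ 27070 := by
    rw [div_le_iff₀ Real.pi_pos]
    linarith [Real.pi_gt_d4]
  have hsqrt : √(2 / (4 / Real.log x)) ≤ (32 + Real.log x) / 16 := by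
    rw [div_div_eq_mul_div, Real.sqrt_le_left (by positivity)]
    nlinarith [sq_nonneg (Real.log x - 32)]
  calc 85000 / Real.pi * x ^ (-(2 / 5) : ℝ) * √(2 / (4 / Real.log x))
    _ ≤ 27070 * x ^ (-(2 / 5) : ℝ) * ((32 + Real.log x) / 16) := by gcongr
    _ = 27070 / 16 * (x ^ (-(2 / 5) : ℝ) * (32 + Real.log x)) := by ring
    _ ≤ 27070 / 16 * (1 / 2400) := by gcongr; exact rpow_neg_mul_add_log_le hx
    _ ≤ 0.706 := by norm_num

lemma sum_prime_log_sq_div_le_sum_vonMangoldt (x : ℝ) :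
    ∑ p ∈ (Finset.Iic ⌊x⌋₊).filter Nat.Prime, Real.log p ^ 2 / (p : ℝ) ≤
      ∑ n ∈ Finset.Iic ⌊x⌋₊, Λ n * Real.log n / n :=
  calc ∑ p ∈ (Finset.Iic ⌊x⌋₊).filter Nat.Prime, Real.log p ^ 2 / (p : ℝ)
    _ = ∑ p ∈ (Finset.Iic ⌊x⌋₊).filter Nat.Prime, Λ p * Real.log p / p :=
      Finset.sum_congr rfl fun p hp ↦ by
        rw [vonMangoldt_apply_prime (Finset.mem_filter.1 hp).2, sq]
    _ ≤ ∑ n ∈ Finset.Iic ⌊x⌋₊, Λ n * Real.log n / n :=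
      Finset.sum_le_sum_of_subset_of_nonneg (Finset.filter_subset _ _) fun n _ _ ↦
        div_nonneg (mul_nonneg vonMangoldt_nonneg (Real.log_natCast_nonneg n)) n.cast_nonneg

theorem sum_log_sq_div_p_lt_general (hRH : RiemannHypothesis) {x : ℝ} (hx : 10 ^ 13 ≤ x) :
    ∑ n ∈ Finset.Iic ⌊x⌋₊, Λ n * Real.log n / n < Real.log x ^ 2 / 2 + 3.5402 := by
  have hlog : 13 ≤ Real.log x := by
    rw [Real.le_log_iff_exp_le (by linarith), ← mul_one 13, ← Nat.cast_ofNat, Real.exp_nat_mul]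
    exact (pow_le_pow_left₀ (Real.exp_nonneg 1) Real.exp_one_lt_three.le 13).trans
      (le_trans (by norm_num) hx)
  have hmain := sum_vonMangoldt_mul_log_div_le hRH (x := x) (δ := 4 / Real.log x) (by linarith)
    (by positivity) (by rw [div_le_div_iff₀ (by positivity) (by norm_num)]; linarith)
  have herror := rpow_neg_mul_sqrt_log_le hx
  have hcube (u : ℝ) (hu : u ≠ 0) :
      ((u + 4 / u) ^ 3 - u ^ 3) / (6 * (4 / u)) = u ^ 2 / 2 + 2 + 8 / 3 / u ^ 2 := by
    field_simp
    ring
  have hquad : 8 / 3 / Real.log x ^ 2 ≤ 8 / 3 / 13 ^ 2 := by gcongr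
  have hexp : Real.exp (-1) < 0.3679 := Real.exp_neg_one_lt_d9.trans (by norm_num)
  rw [hcube _ (by positivity)] at hmain
  linarith

end MainBound

/-- Assuming RH, for `x ≥ 10^13` we have `∑_{p ≤ x} (log p)²/p < (log x)²/2 + 3.5402`. -/
theorem sum_log_sq_div_p_lt (hRH : RiemannHypothesis) (x : ℝ)
    (hx : (10 : ℝ) ^ (13 : ℕ) ≤ x) :
    ∑ p ∈ (Finset.Iic ⌊x⌋₊).filter Nat.Prime, Real.log p ^ 2 / (p : ℝ) <
      Real.log x ^ 2 / 2 + 3.5402 :=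
  (sum_prime_log_sq_div_le_sum_vonMangoldt x).trans_lt (sum_log_sq_div_p_lt_general hRH hx)
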